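/- arXiv:2211.02329 — 11 statements merged into one kernel-verified Lean document; each statement's English description precedes it below -/
import Mathlib

section
/- Let p be a prime, q = p^m, and let k, r be integers with k > r ≥ 3 and p not dividing k. Let a_0, a_1, …, a_k ∈ F_{q^r} with a_k ≠ 0. Then the polynomial V_{k,r}(X_1,…,X_r) = −∏_{i=1}^r X_i + Σ_{u=1}^{k} Σ_{i=1}^{r} a_u^{q^{i-1}} X_i^u + T(a_0) is irreducible in F̄_q[X_1,…,X_r], where F̄_q is an algebraic closure of F_q containing F_{q^r}; that is, the variety V_{k,r} is absolutely irreducible. -/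
open MvPolynomial

noncomputable def gradHom (σ K : Type) [Field K] :
    MvPolynomial σ K →ₐ[K] Polynomial (MvPolynomial σ K) :=
  aeval (fun i => Polynomial.C (X i) * Polynomial.X)

lemma gradHom_coeff {σ K : Type} [Field K] (g : MvPolynomial σ K) (d : ℕ) :
    (gradHom σ K g).coeff d = homogeneousComponent d g := by
  induction g using MvPolynomial.induction_on' with
  | monomial u a =>
    have h : gradHom σ K (monomial u a) = Polynomial.C (monomial u a) * Polynomial.X ^ u.degree := by
      rw [gradHom, aeval_monomial, monomial_eq, Finsupp.prod, Finsupp.prod]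
      simp only [mul_pow, Finset.prod_mul_distrib, Finset.prod_pow_eq_pow_sum, map_mul, map_prod,
        map_pow, Finsupp.degree, mul_assoc]
      rfl
    rw [h, Polynomial.coeff_C_mul, Polynomial.coeff_X_pow,
      homogeneousComponent_of_mem (isHomogeneous_monomial a (rfl : u.degree = u.degree))]
    split_ifs <;> simp_all
  | add p q hp hq => simp [hp, hq]

lemma gradHom_eval {σ K : Type} [Field K] (g : MvPolynomial σ K) :
    (gradHom σ K g).eval 1 = g := by
  induction g using MvPolynomial.induction_on with
  | C a => simp [gradHom, MvPolynomial.algebraMap_eq]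
  | add p q hp hq => simp [hp, hq]
  | mul_X p i hp => rw [map_mul, Polynomial.eval_mul, hp]; simp [gradHom]

lemma isUnit_of_lc {σ K : Type} [Field K] (g : MvPolynomial σ K)
    (h : IsUnit (gradHom σ K g).leadingCoeff) : IsUnit g := by
  have h0 : (gradHom σ K g).leadingCoeff ≠ 0 := h.ne_zero
  have hd : (gradHom σ K g).natDegree = 0 := by
    have h1 := isUnit_iff_totalDegree_of_isReduced.1 h
    have h2 : (gradHom σ K g).leadingCoeff.IsHomogeneous (gradHom σ K g).natDegree := by
      rw [Polynomial.leadingCoeff, gradHom_coeff]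
      exact homogeneousComponent_isHomogeneous _ _
    rw [← h2.totalDegree h0]; exact h1.2
  have h3 := Polynomial.eq_C_of_natDegree_eq_zero hd
  have h4 := gradHom_eval g
  rw [h3, Polynomial.eval_C] at h4
  rw [Polynomial.leadingCoeff, hd, h4] at h
  exact h

lemma irreducible_of_top {σ K : Type} [Field K] (F R : MvPolynomial σ K) (k : ℕ)
    (hF : F.IsHomogeneous k) (hR : R.totalDegree < k) (hi : Irreducible F) :
    Irreducible (F + R) := by
  have hk : (gradHom σ K (F + R)).coeff k = F := by
    rw [gradHom_coeff, map_add, homogeneousComponent_eq_zero _ _ hR, add_zero]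
    exact homogeneousComponent_eq_self hF
  have hdeg : (gradHom σ K (F + R)).natDegree = k := by
    apply Polynomial.natDegree_eq_of_le_of_coeff_ne_zero
    · rw [Polynomial.natDegree_le_iff_coeff_eq_zero]
      intro N hN
      rw [gradHom_coeff, map_add, homogeneousComponent_eq_zero _ _ (hR.trans hN), add_zero,
        homogeneousComponent_of_mem hF, if_neg (by omega)]
    · rw [hk]; exact hi.ne_zero
  have hlc : (gradHom σ K (F + R)).leadingCoeff = F := by
    rw [Polynomial.leadingCoeff, hdeg, hk]
  constructor
  · intro hu
    have := (hu.map (gradHom σ K)).map (Polynomial.leadingCoeffHom)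
    rw [Polynomial.leadingCoeffHom_apply, hlc] at this
    exact hi.not_isUnit this
  · intro g h hgh
    have e : F = (gradHom σ K g).leadingCoeff * (gradHom σ K h).leadingCoeff := by
      rw [← hlc, hgh, map_mul, Polynomial.leadingCoeff_mul]
    exact (hi.isUnit_or_isUnit e).imp (isUnit_of_lc g) (isUnit_of_lc h)

lemma fermat_irred {K : Type} [Field K] (n k : ℕ) (hn : 2 ≤ n) (hk : 2 ≤ k) (hkK : (k : K) ≠ 0)
    (b : Fin (n + 1) → K) (hb : ∀ i, b i ≠ 0) :
    Irreducible (∑ i, C (b i) * X i ^ k : MvPolynomial (Fin (n + 1)) K) := by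
  rw [← MulEquiv.irreducible_iff (finSuccEquiv K n)]
  set G : MvPolynomial (Fin n) K := ∑ i : Fin n, C (b i.succ) * X i ^ k with hG
  have hC : ∀ c : K, finSuccEquiv K n (C c) = Polynomial.C (C c) := fun c =>
    RingHom.congr_fun (finSuccEquiv_comp_C_eq_C n) c |> fun h => by
      simp [finSuccEquiv_apply]
  have hf : finSuccEquiv K n (∑ i, C (b i) * X i ^ k) =
      Polynomial.C (C (b 0)) * Polynomial.X ^ k + Polynomial.C G := by
    rw [Fin.sum_univ_succ, map_add, map_sum, hG, map_sum]
    simp only [map_mul, map_pow, finSuccEquiv_X_zero, finSuccEquiv_X_succ, hC]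
  rw [hf]
  have hder : ∀ i, pderiv i G = C (b i.succ * k) * X i ^ (k - 1) := by
    intro i
    rw [hG, map_sum, Finset.sum_eq_single i]
    · simp [Derivation.leibniz_pow, pderiv_X_self, mul_assoc]
    · intro j _ hj
      simp [Derivation.leibniz_pow, pderiv_X_of_ne hj]
    · simp
  have hun : ∀ i : Fin n, IsUnit (C (b i.succ * k) : MvPolynomial (Fin n) K) := fun i =>
    (IsUnit.mk0 _ (mul_ne_zero (hb _) hkK)).map C
  let i0 : Fin n := ⟨0, by omega⟩
  let i1 : Fin n := ⟨1, by omega⟩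
  have hG0 : G ≠ 0 := by
    intro h
    have := hder i0
    rw [h, map_zero] at this
    exact mul_ne_zero (hun i0).ne_zero (pow_ne_zero _ (X_ne_zero i0)) this.symm
  have hGh : G.IsHomogeneous k := by
    apply IsHomogeneous.sum
    intro i _
    simpa using (isHomogeneous_C (Fin n) (b i.succ)).mul (isHomogeneous_X_pow (R := K) i k)
  have hGu : ¬ IsUnit G := by
    intro h
    have h1 := (isUnit_iff_totalDegree_of_isReduced.1 h).2
    rw [hGh.totalDegree hG0] at h1
    omega
  obtain ⟨P, hP, hPG⟩ := WfDvdMonoid.exists_irreducible_factor hGu hG0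
  have hPp : Prime P := hP.prime
  have hsq : ¬ P ^ 2 ∣ G := by
    rintro ⟨Q, hQ⟩
    have hX : ∀ i, P ∣ X i := by
      intro i
      have h1 : P ∣ pderiv i G := by
        rw [hQ, Derivation.leibniz, Derivation.leibniz_pow]
        simp only [smul_eq_mul, nsmul_eq_mul]
        refine dvd_add (Dvd.intro (P * pderiv i Q) (by ring)) ?_
        exact Dvd.intro (Q * (2 * pderiv i P)) (by push_cast; ring)
      rw [hder, (hun i).dvd_mul_left] at h1
      exact hPp.dvd_of_dvd_pow h1
    have h01 : (X i0 : MvPolynomial (Fin n) K) ∣ X i1 :=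
      ((hP.associated_of_dvd (MvPolynomial.X_prime (i := i0)).irreducible (hX i0)).symm.dvd).trans (hX i1)
    rw [X_dvd_X] at h01
    simp [i0, i1] at h01
  have hb0 : IsUnit (C (b 0) : MvPolynomial (Fin n) K) := (IsUnit.mk0 _ (hb 0)).map C
  have hdeg : (Polynomial.C (C (b 0)) * Polynomial.X ^ k + Polynomial.C G :
      Polynomial (MvPolynomial (Fin n) K)).degree = k := by
    rw [Polynomial.degree_add_C, Polynomial.degree_C_mul_X_pow _ hb0.ne_zero]
    rw [Polynomial.degree_C_mul_X_pow _ hb0.ne_zero]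
    exact_mod_cast (by omega : 0 < k)
  have hlc : (Polynomial.C (C (b 0)) * Polynomial.X ^ k + Polynomial.C G :
      Polynomial (MvPolynomial (Fin n) K)).leadingCoeff = C (b 0) := by
    rw [Polynomial.leadingCoeff, Polynomial.natDegree_eq_of_degree_eq_some hdeg]
    simp [Polynomial.coeff_C, show k ≠ 0 by omega]
  have hPI : (Ideal.span {P}).IsPrime := (Ideal.span_singleton_prime hPp.ne_zero).2 hPp
  refine Polynomial.irreducible_of_eisenstein_criterion (P := Ideal.span {P}) hPI ?_ ?_ ?_ ?_ ?_
  · rw [hlc]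
    exact fun h => hPI.ne_top (Ideal.eq_top_of_isUnit_mem _ h hb0)
  · intro m hm
    rw [hdeg] at hm
    have hm' : m < k := by exact_mod_cast hm
    rw [Polynomial.coeff_add, Polynomial.coeff_C_mul, Polynomial.coeff_X_pow, if_neg hm'.ne,
      mul_zero, zero_add, Polynomial.coeff_C]
    split_ifs
    · exact Ideal.mem_span_singleton.2 hPG
    · exact zero_mem _
  · rw [hdeg]; exact_mod_cast (by omega : 0 < k)
  · rw [Ideal.span_singleton_pow, Ideal.mem_span_singleton]
    simpa [Polynomial.coeff_X_pow, show ¬ 0 = k by omega, show k ≠ 0 by omega] using hsq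
  · intro c hc
    rw [Polynomial.C_dvd_iff_dvd_coeff] at hc
    have := hc k
    rw [Polynomial.coeff_add, Polynomial.coeff_C_mul, Polynomial.coeff_X_pow, if_pos rfl,
      mul_one, Polynomial.coeff_C, if_neg (by omega), add_zero] at this
    exact isUnit_of_dvd_unit this hb0

/-- For `k > r ≥ 3` and `p ∤ k`, the polynomial
`V_{k,r} = -∏ X_i + ∑_{u=1}^k ∑_{i=1}^r a_u^{q^{i-1}} X_i^u + T(a_0)`
with coefficients `a_u ∈ F_{q^r}` and `a_k ≠ 0` is absolutely irreducible, i.e.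
irreducible over an algebraic closure of `F_q`. -/
theorem stmt_4 (p m q k r : ℕ) (hp : p.Prime) (hm : 0 < m) (hq : q = p ^ m)
    (hr : 3 ≤ r) (hkr : k > r) (hpk : ¬ p ∣ k)
    (K : Type) [Field K] [IsAlgClosed K] [CharP K p]
    (a : ℕ → K) (hmem : ∀ u ≤ k, a u ^ q ^ r = a u) (hak : a k ≠ 0) :
    Irreducible
      (-(∏ i : Fin r, X i) +
        (∑ u ∈ Finset.Icc 1 k, ∑ i : Fin r, C (a u ^ q ^ (i : ℕ)) * X i ^ u) +
        C (∑ i ∈ Finset.range r, a 0 ^ q ^ i) : MvPolynomial (Fin r) K) := by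
  have hkK : (k : K) ≠ 0 := fun h => hpk ((CharP.cast_eq_zero_iff K p k).1 h)
  obtain ⟨n, rfl⟩ : ∃ n, r = n + 1 := ⟨r - 1, by omega⟩
  have hF := fermat_irred n k (by omega) (by omega) hkK
    (fun i : Fin (n + 1) => a k ^ q ^ (i : ℕ)) (fun i => pow_ne_zero _ hak)
  have hterm : ∀ (u : ℕ) (i : Fin (n + 1)),
      (C (a u ^ q ^ (i : ℕ)) * X i ^ u : MvPolynomial (Fin (n + 1)) K).IsHomogeneous u := by
    intro u i
    simpa using (isHomogeneous_C (Fin (n + 1)) (a u ^ q ^ (i : ℕ))).mul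
      (isHomogeneous_X_pow (R := K) i u)
  obtain ⟨k', rfl⟩ : ∃ k', k = k' + 1 := ⟨k - 1, by omega⟩
  have key := irreducible_of_top _
    (-(∏ i : Fin (n + 1), X i) +
        (∑ u ∈ Finset.Icc 1 k', ∑ i : Fin (n + 1), C (a u ^ q ^ (i : ℕ)) * X i ^ u) +
        C (∑ i ∈ Finset.range (n + 1), a 0 ^ q ^ i) : MvPolynomial (Fin (n + 1)) K) (k' + 1)
    (IsHomogeneous.sum _ _ _ fun i _ => hterm (k' + 1) i) ?_ hF
  · rw [Finset.sum_Icc_succ_top (by omega)]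
    convert key using 1
    ring
  · refine Nat.lt_succ_of_le ?_
    refine (totalDegree_add _ _).trans (max_le ((totalDegree_add _ _).trans (max_le ?_ ?_)) ?_)
    · rw [totalDegree_neg]
      refine (totalDegree_finset_prod _ _).trans ?_
      simp only [totalDegree_X, Finset.sum_const, Finset.card_univ, Fintype.card_fin, smul_eq_mul]
      omega
    · refine totalDegree_finsetSum_le fun u hu => totalDegree_finsetSum_le fun i _ => ?_
      exact (hterm u i).totalDegree_le.trans (Finset.mem_Icc.1 hu).2
    · rw [totalDegree_C]; omega
end

section
/- Let p be a prime, q = p^m, and let k = r ≥ 4 be an integer with p not dividing k. Let a_0, a_1, …, a_r ∈ F_{q^r} with a_r ≠ 0. Then the polynomial V_{r,r}(X_1,…,X_r) = −∏_{i=1}^r X_i + Σ_{u=1}^{r} Σ_{i=1}^{r} a_u^{q^{i-1}} X_i^u + T(a_0) is irreducible in F̄_q[X_1,…,X_r]; that is, the variety V_{r,r} is absolutely irreducible. -/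
open MvPolynomial

lemma aux_fermat (K : Type) [Field K] [IsAlgClosed K] (r : ℕ) (hr : 0 < r) (hrK : (r : K) ≠ 0)
    (b0 b1 b2 : K) (h0 : b0 ≠ 0) (h1 : b1 ≠ 0) (h2 : b2 ≠ 0) (F : Polynomial (Polynomial K))
    (hF : F = Polynomial.C (Polynomial.C b0) * Polynomial.X ^ r +
      Polynomial.C (Polynomial.C b1 * Polynomial.X ^ r + Polynomial.C b2)) :
    Irreducible F ∧ F.natDegree = r := by
  have hdeg : F.natDegree = r := by
    rw [hF, Polynomial.natDegree_add_C, Polynomial.natDegree_C_mul_X_pow]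
    simpa using h0
  have hco : ∀ n, F.coeff n = (if n = r then Polynomial.C b0 else 0) +
      (if n = 0 then (Polynomial.C b1 * Polynomial.X ^ r + Polynomial.C b2) else 0) := by
    intro n
    rw [hF, Polynomial.coeff_add, Polynomial.coeff_C_mul_X_pow, Polynomial.coeff_C]
  have hlc : F.leadingCoeff = Polynomial.C b0 := by
    rw [Polynomial.leadingCoeff, hdeg, hco]
    simp [hr.ne']
  have hu : IsUnit F.leadingCoeff := by
    rw [hlc]; exact Polynomial.isUnit_C.2 h0.isUnit
  refine ⟨?_, hdeg⟩
  obtain ⟨c, hc⟩ := IsAlgClosed.exists_pow_nat_eq (-b2 / b1) hr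
  have hc0 : c ≠ 0 := by
    rintro rfl
    rw [zero_pow hr.ne'] at hc
    have : -b2 / b1 ≠ 0 := div_ne_zero (neg_ne_zero.2 h2) h1
    exact this hc.symm
  have hP : (Ideal.span {Polynomial.X - Polynomial.C c} : Ideal (Polynomial K)).IsPrime :=
    (Ideal.span_singleton_prime (Polynomial.X_sub_C_ne_zero c)).2 (Polynomial.prime_X_sub_C c)
  apply Polynomial.irreducible_of_eisenstein_criterion hP
  · intro h
    exact hP.ne_top (Ideal.eq_top_of_isUnit_mem _ h hu)
  · intro n hn
    have hn' : n < r := by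
      rw [← hdeg]; exact Polynomial.coe_lt_degree.1 hn
    rw [hco, if_neg hn'.ne, zero_add]
    split_ifs
    · rw [Ideal.mem_span_singleton, Polynomial.dvd_iff_isRoot]
      simp [hc]
      field_simp
      ring
    · exact zero_mem _
  · rw [← Polynomial.natDegree_pos_iff_degree_pos, hdeg]; exact hr
  · rw [hco, if_neg hr.ne, if_pos rfl, zero_add, Ideal.span_singleton_pow,
      Ideal.mem_span_singleton]
    rintro ⟨g, hg⟩
    have := congrArg (fun f => Polynomial.eval c (Polynomial.derivative f)) hg
    simp [Polynomial.derivative_pow] at this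
    tauto
  · intro x hx
    exact isUnit_of_dvd_unit ((Polynomial.C_dvd_iff_dvd_coeff _ _).1 hx _) hu

lemma aux_coeff (K : Type) [Field K] (r : ℕ) (w : Fin r → Polynomial (Polynomial K))
    (hw : ∀ i, (w i).natDegree ≤ 1) (G : MvPolynomial (Fin r) K) (n : ℕ) :
    ((aeval (fun i => Polynomial.C (w i) * Polynomial.X) G).coeff n).natDegree ≤ n := by
  induction G using MvPolynomial.induction_on generalizing n with
  | C a =>
    rw [← MvPolynomial.algebraMap_eq, AlgHom.commutes]
    rw [Polynomial.algebraMap_apply, Polynomial.coeff_C]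
    split_ifs
    · rw [Polynomial.algebraMap_apply]; simp
    · simp
  | add p q hp hq =>
    rw [map_add, Polynomial.coeff_add]
    exact Polynomial.natDegree_add_le_of_degree_le (hp n) (hq n)
  | mul_X p i hp =>
    rw [map_mul, aeval_X, ← mul_assoc]
    cases n with
    | zero => simp
    | succ n =>
      rw [Polynomial.coeff_mul_X, Polynomial.coeff_mul_C]
      exact Polynomial.natDegree_mul_le_of_le (hp n) (hw i)

lemma aux_deg (K : Type) [Field K] (r : ℕ) (w : Fin r → Polynomial (Polynomial K))
    (G : MvPolynomial (Fin r) K) :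
    (aeval (fun i => Polynomial.C (w i) * Polynomial.X) G :
      Polynomial (Polynomial (Polynomial K))).natDegree ≤ G.totalDegree := by
  rw [MvPolynomial.aeval_def, MvPolynomial.eval₂]
  apply (Polynomial.natDegree_sum_le _ _).trans
  apply Finset.sup_le
  intro d hd
  simp only [Function.comp_apply, Polynomial.algebraMap_apply]
  apply (Polynomial.natDegree_C_mul_le _ _).trans
  apply (Polynomial.natDegree_prod_le _ _).trans
  refine le_trans (Finset.sum_le_sum fun i _ => ?_) (MvPolynomial.le_totalDegree hd)
  refine Polynomial.natDegree_pow_le.trans ?_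
  have := (Polynomial.natDegree_C_mul_le (w i) Polynomial.X).trans Polynomial.natDegree_X_le
  exact (Nat.mul_le_mul_left _ this).trans (by simp)

lemma aux_term (A : Type) [CommRing A] (c w : A) (u n : ℕ) :
    (Polynomial.C c * (Polynomial.C w * Polynomial.X) ^ u).coeff n =
      if n = u then c * w ^ u else 0 := by
  rw [mul_pow, ← Polynomial.C_pow, Polynomial.coeff_C_mul, Polynomial.coeff_C_mul_X_pow]
  split_ifs <;> simp

lemma aux_neg (K B : Type) [Field K] [CommRing B] [Algebra K B] (r : ℕ)
    (φ : MvPolynomial (Fin r) K →ₐ[K] B) (i : Fin r) (h : φ (X i) = 0) :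
    φ (-∏ i : Fin r, X i) = 0 := by
  rw [map_neg, map_prod, Finset.prod_eq_zero (Finset.mem_univ i) h, neg_zero]

lemma aux_sum (R : Type) [CommRing R] (s : ℕ) (g : Fin (s + 3) → R)
    (hg : ∀ i : Fin s, g i.succ.succ.succ = 0) :
    ∑ i, g i = g ⟨0, by omega⟩ + g ⟨1, by omega⟩ + g ⟨2, by omega⟩ := by
  rw [Fin.sum_univ_succ, Fin.sum_univ_succ, Fin.sum_univ_succ,
    Finset.sum_eq_zero fun i _ => hg i, add_zero, ← add_assoc]
  rfl

lemma aux_main (K : Type) [Field K] [IsAlgClosed K] (r : ℕ) (hr : 4 ≤ r) (hrK : (r : K) ≠ 0)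
    (b : ℕ → Fin r → K) (hb : ∀ i, b r i ≠ 0) (c : K) :
    Irreducible
      (-(∏ i : Fin r, X i) +
        (∑ u ∈ Finset.Icc 1 r, ∑ i : Fin r, C (b u i) * X i ^ u) +
        C c : MvPolynomial (Fin r) K) := by
  set V : MvPolynomial (Fin r) K := (-(∏ i : Fin r, X i) +
        (∑ u ∈ Finset.Icc 1 r, ∑ i : Fin r, C (b u i) * X i ^ u) + C c) with hV
  have hVdeg : V.totalDegree ≤ r := by
    refine (totalDegree_add _ _).trans (max_le ((totalDegree_add _ _).trans (max_le ?_ ?_)) ?_)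
    · rw [totalDegree_neg]
      refine (totalDegree_finsetProd _ _).trans ?_
      simp
    · refine totalDegree_finsetSum_le fun u hu => totalDegree_finsetSum_le fun i _ => ?_
      refine (totalDegree_mul _ _).trans ?_
      rw [totalDegree_C, totalDegree_X_pow, zero_add]
      exact (Finset.mem_Icc.1 hu).2
    · simp
  let w : Fin r → Polynomial (Polynomial K) := fun i =>
    if i.val = 0 then Polynomial.X else if i.val = 1 then Polynomial.C Polynomial.X
    else if i.val = 2 then 1 else 0
  have hw : ∀ i, (w i).natDegree ≤ 1 := by
    intro i
    simp only [w]
    split_ifs <;> simp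
  let φ : MvPolynomial (Fin r) K →ₐ[K] Polynomial (Polynomial (Polynomial K)) :=
    aeval (fun i => Polynomial.C (w i) * Polynomial.X)
  have hφdeg : ∀ G, (φ G).natDegree ≤ G.totalDegree := by
    exact aux_deg K r w
  have hcoeff : (φ V).coeff r = ∑ i, Polynomial.C (Polynomial.C (b r i)) * w i ^ r := by
    have hX : ∀ i, φ (X i) = Polynomial.C (w i) * Polynomial.X := fun i => aeval_X _ _
    have hneg : φ (-∏ i : Fin r, X i) = 0 := by
      refine aux_neg K (Polynomial (Polynomial (Polynomial K))) r φ ⟨3, by omega⟩ ?_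
      rw [hX]; simp [w]
    have hC : ∀ x : K, φ (C x) = Polynomial.C (Polynomial.C (Polynomial.C x)) := by
      intro x
      rw [← MvPolynomial.algebraMap_eq, AlgHom.commutes]; rfl
    rw [hV, map_add, map_add, hneg, hC, zero_add, Polynomial.coeff_add,
      Polynomial.coeff_C, if_neg (by omega), add_zero, map_sum, Polynomial.finsetSum_coeff,
      Finset.sum_eq_single r]
    · rw [map_sum, Polynomial.finsetSum_coeff]
      refine Finset.sum_congr rfl fun i _ => ?_
      rw [map_mul, map_pow, hC, hX, aux_term, if_pos rfl]
    · intro u _ hu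
      rw [map_sum, Polynomial.finsetSum_coeff]
      refine Finset.sum_eq_zero fun i _ => ?_
      rw [map_mul, map_pow, hC, hX, aux_term, if_neg (Ne.symm hu)]
    · intro h
      exact absurd (Finset.mem_Icc.2 ⟨by omega, le_rfl⟩) h
  have hirr : Irreducible ((φ V).coeff r) ∧ ((φ V).coeff r).natDegree = r := by
    refine aux_fermat K r (by omega) hrK (b r ⟨0, by omega⟩) (b r ⟨1, by omega⟩)
      (b r ⟨2, by omega⟩) (hb _) (hb _) (hb _) _ ?_
    rw [hcoeff]
    clear hcoeff hφdeg hw φ hVdeg hV V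
    obtain ⟨s, rfl⟩ : ∃ s, r = s + 3 := ⟨r - 3, by omega⟩
    rw [aux_sum]
    · simp only [w, if_true, one_ne_zero, if_false, OfNat.ofNat_ne_zero, OfNat.ofNat_ne_one,
        one_pow, mul_one, Polynomial.C_add, Polynomial.C_mul, Polynomial.C_pow, add_assoc]
    · intro i
      simp [w]
  obtain ⟨hirr, hnd⟩ := hirr
  have hφV : (φ V).natDegree = r :=
    le_antisymm ((hφdeg V).trans hVdeg) (Polynomial.le_natDegree_of_ne_zero hirr.ne_zero)
  have hVr : V.totalDegree = r := le_antisymm hVdeg (hφV.symm.le.trans (hφdeg V))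
  have hV0 : V ≠ 0 := by
    intro h
    rw [h, totalDegree_zero] at hVr
    omega
  have hunit : ∀ G : MvPolynomial (Fin r) K, G ≠ 0 → G.totalDegree = 0 → IsUnit G := by
    intro G hG h
    rw [totalDegree_eq_zero_iff_eq_C] at h
    rw [h]
    refine IsUnit.map C (IsUnit.mk0 _ ?_)
    intro h'
    rw [h', map_zero] at h
    exact hG h
  have key : ∀ G H, V = G * H → IsUnit (φ G).leadingCoeff → IsUnit G := by
    intro G H hGH hu
    have hG : G ≠ 0 := by rintro rfl; simp at hGH; exact hV0 hGH
    have hH : H ≠ 0 := by rintro rfl; simp at hGH; exact hV0 hGH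
    have hsum : G.totalDegree + H.totalDegree = r := by
      rw [← totalDegree_mul_of_isDomain hG hH, ← hGH, hVr]
    have hlc : (φ V).coeff r = (φ G).leadingCoeff * (φ H).leadingCoeff := by
      rw [← Polynomial.leadingCoeff_mul, ← map_mul, ← hGH, Polynomial.leadingCoeff, hφV]
    have h1 : (φ H).leadingCoeff.natDegree ≤ (φ H).natDegree := aux_coeff K r w hw H _
    have h2 := hφdeg H
    have h3 : r ≤ (φ H).leadingCoeff.natDegree := by
      refine hnd.symm.le.trans ?_
      rw [hlc]
      refine Polynomial.natDegree_mul_le.trans ?_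
      rw [Polynomial.natDegree_eq_zero_of_isUnit hu, zero_add]
    exact hunit G hG (by omega)
  refine ⟨?_, ?_⟩
  · intro h
    have := (MvPolynomial.isUnit_iff_totalDegree_of_isReduced).1 h
    omega
  · intro G H hGH
    have hlc : (φ V).coeff r = (φ G).leadingCoeff * (φ H).leadingCoeff := by
      rw [← Polynomial.leadingCoeff_mul, ← map_mul, ← hGH, Polynomial.leadingCoeff, hφV]
    rcases hirr.isUnit_or_isUnit hlc with h | h
    · exact Or.inl (key G H hGH h)
    · exact Or.inr (key H G (by rw [hGH, mul_comm]) h)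

/-- For `k = r ≥ 4` and `p ∤ r`, the polynomial
`V_{r,r} = -∏ X_i + ∑_{u=1}^r ∑_{i=1}^r a_u^{q^{i-1}} X_i^u + T(a_0)`
with coefficients `a_u ∈ F_{q^r}` and `a_r ≠ 0` is absolutely irreducible. -/
theorem stmt_5 (p m q r : ℕ) (hp : p.Prime) (hm : 0 < m) (hq : q = p ^ m)
    (hr : 4 ≤ r) (hpr : ¬ p ∣ r)
    (K : Type) [Field K] [IsAlgClosed K] [CharP K p]
    (a : ℕ → K) (hmem : ∀ u ≤ r, a u ^ q ^ r = a u) (har : a r ≠ 0) :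
    Irreducible
      (-(∏ i : Fin r, X i) +
        (∑ u ∈ Finset.Icc 1 r, ∑ i : Fin r, C (a u ^ q ^ (i : ℕ)) * X i ^ u) +
        C (∑ i ∈ Finset.range r, a 0 ^ q ^ i) : MvPolynomial (Fin r) K) := by
  have hrK : (r : K) ≠ 0 := by
    rw [Ne, CharP.cast_eq_zero_iff K p]; exact hpr
  exact aux_main K r hr hrK (fun u i => a u ^ q ^ (i : ℕ)) (fun i => pow_ne_zero _ har) _
end

section
/- Let p be a prime, q = p^m, and let k = r ≥ 4 be an integer with p dividing r. Let a_0, a_1, …, a_r ∈ F_{q^r} with a_r ≠ 0. Then the polynomial V_{r,r}(X_1,…,X_r) = −∏_{i=1}^r X_i + Σ_{u=1}^{r} Σ_{i=1}^{r} a_u^{q^{i-1}} X_i^u + T(a_0) is irreducible in F̄_q[X_1,…,X_r]; that is, the variety V_{r,r} is absolutely irreducible. -/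
open MvPolynomial

/-- The product of top-degree components is the top-degree component of the product. -/
lemma top_comp {σ K : Type*} [Field K] (G H : MvPolynomial σ K) :
    homogeneousComponent (G.totalDegree + H.totalDegree) (G * H) =
      homogeneousComponent G.totalDegree G * homogeneousComponent H.totalDegree H := by
  classical
  ext d
  rw [coeff_homogeneousComponent]
  split_ifs with hd
  · rw [coeff_mul, coeff_mul]
    refine Finset.sum_congr rfl fun x hx => ?_
    rw [Finset.HasAntidiagonal.mem_antidiagonal] at hx
    rw [coeff_homogeneousComponent, coeff_homogeneousComponent]
    have hdeg : x.1.degree + x.2.degree = G.totalDegree + H.totalDegree := by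
      rw [← hd, ← hx, map_add]
    by_cases h1 : G.totalDegree < x.1.degree
    · rw [coeff_eq_zero_of_totalDegree_lt (f := G) (d := x.1) h1]; simp
    by_cases h2 : H.totalDegree < x.2.degree
    · rw [coeff_eq_zero_of_totalDegree_lt (f := H) (d := x.2) h2]; simp
    rw [if_pos (by omega), if_pos (by omega)]
  · exact (((homogeneousComponent_isHomogeneous _ G).mul
      (homogeneousComponent_isHomogeneous _ H)).coeff_eq_zero hd).symm

/-- Polynomials in three nested variables. -/
abbrev TriPoly (K : Type*) [Field K] := Polynomial (Polynomial (Polynomial K))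

/-- The Fermat-type trinomial `Z^t + Y^t + δ X^t` -/
noncomputable def fermat (K : Type*) [Field K] (t : ℕ) (δ : K) :
    Polynomial (Polynomial (Polynomial K)) :=
  Polynomial.X ^ t + Polynomial.C (Polynomial.X ^ t +
    Polynomial.C (Polynomial.C δ * Polynomial.X ^ t))

lemma fermat_irreducible {K : Type*} [Field K] [IsAlgClosed K] (t : ℕ) (ht : (t : K) ≠ 0)
    (δ : K) (hδ : δ ≠ 0) : Irreducible (fermat K t δ) := by
  have ht0 : 0 < t := by
    rcases Nat.eq_zero_or_pos t with h | h
    · subst h; simp at ht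
    · exact h
  obtain ⟨η, hη⟩ := IsAlgClosed.exists_pow_nat_eq (-δ) ht0
  have hη0 : η ≠ 0 := by
    rintro rfl
    rw [zero_pow ht0.ne'] at hη
    exact hδ (by simpa using hη.symm)
  set A : Polynomial (Polynomial K) := Polynomial.X ^ t +
    Polynomial.C (Polynomial.C δ * Polynomial.X ^ t) with hA
  set ρ : Polynomial (Polynomial K) :=
    Polynomial.X - Polynomial.C (Polynomial.C η * Polynomial.X) with hρ
  have hρp : Prime ρ := Polynomial.prime_X_sub_C _
  have hmonic : (fermat K t δ).Monic := Polynomial.monic_X_pow_add_C _ ht0.ne'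
  have hdeg : (fermat K t δ).degree = t := Polynomial.degree_X_pow_add_C ht0 _
  have hPr : (Ideal.span {ρ}).IsPrime :=
    (Ideal.span_singleton_prime hρp.ne_zero).2 hρp
  refine Polynomial.irreducible_of_eisenstein_criterion hPr ?_ ?_ ?_ ?_ hmonic.isPrimitive
  · rw [hmonic.leadingCoeff]
    exact fun h => hPr.ne_top ((Ideal.eq_top_iff_one _).2 h)
  · intro n hn
    rw [hdeg] at hn
    have hn' : n < t := by exact_mod_cast hn
    simp only [fermat, Polynomial.coeff_add, Polynomial.coeff_X_pow, Polynomial.coeff_C,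
      if_neg hn'.ne, zero_add]
    split_ifs
    · rw [Ideal.mem_span_singleton, Polynomial.dvd_iff_isRoot]
      simp only [Polynomial.IsRoot, Polynomial.eval_add, Polynomial.eval_pow, Polynomial.eval_X,
        Polynomial.eval_C]
      rw [mul_pow, ← Polynomial.C_pow, hη]
      simp
    · exact Ideal.zero_mem _
  · rw [hdeg]; exact_mod_cast ht0
  · have h0 : (fermat K t δ).coeff 0 = A := by
      rw [fermat, Polynomial.coeff_add, Polynomial.coeff_X_pow, if_neg ht0.ne, Polynomial.coeff_C_zero,
        zero_add]
    rw [h0, Ideal.span_singleton_pow, Ideal.mem_span_singleton]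
    rintro ⟨Q, hQ⟩
    have h1 := congrArg (fun f => Polynomial.eval (Polynomial.C η * Polynomial.X)
      (Polynomial.derivative f)) hQ
    simp [hA, hρ, Polynomial.derivative_mul, Polynomial.derivative_pow] at h1
    rcases h1 with h1 | h1
    · apply ht
      have h2 := congrArg (Polynomial.eval 1) h1
      simpa using h2
    · exact hη0 h1.1

lemma exists_ne_two {K : Type*} [Field K] [IsAlgClosed K] (u v : K) : ∃ w : K, w ≠ u ∧ w ≠ v := by
  classical
  obtain ⟨w, hw⟩ := Infinite.exists_notMem_finset ({u, v} : Finset K)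
  simp at hw
  exact ⟨w, hw⟩

lemma fermat_not_dvd {K : Type*} [Field K] [IsAlgClosed K] (t : ℕ) (ht0 : 0 < t)
    (δ : K) (n : ℕ) (e : K) (he : e ≠ 0) :
    ¬ fermat K t δ ∣ Polynomial.C (Polynomial.C (Polynomial.C e * Polynomial.X ^ n)) *
      Polynomial.C Polynomial.X * Polynomial.X := by
  rintro ⟨Q, hQ⟩
  obtain ⟨w, hw0, hwδ⟩ := exists_ne_two (0 : K) (-δ)
  obtain ⟨y, hy⟩ := IsAlgClosed.exists_pow_nat_eq w ht0
  obtain ⟨z, hz⟩ := IsAlgClosed.exists_pow_nat_eq (-(w + δ)) ht0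
  have hy0 : y ≠ 0 := by rintro rfl; rw [zero_pow ht0.ne'] at hy; exact hw0 hy.symm
  have hz0 : z ≠ 0 := by
    rintro rfl
    rw [zero_pow ht0.ne'] at hz
    apply hwδ
    linear_combination hz
  have h1 := congrArg (fun f => Polynomial.eval 1 (Polynomial.eval (Polynomial.C y)
    (Polynomial.eval (Polynomial.C (Polynomial.C z)) f))) hQ
  simp [fermat, hy, hz] at h1
  tauto

/-- Core argument, over an abstract domain `B` playing the role of `K[x, y, z]`. -/
lemma core_gen {K B : Type*} [Field K] [IsAlgClosed K] [CommRing B] [IsDomain B] (n : ℕ)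
    (c : Fin (n + 4) → K) (hc : ∀ i, c i ≠ 0) (G H : MvPolynomial (Fin (n + 4)) K)
    (hG : constantCoeff G = 0) (hH : constantCoeff H = 0)
    (hGH : G * H = -(∏ i, X i) + ∑ i, C (c i) * X i ^ (n + 4))
    (κ : K →+* B) (ev : B →+* K) (x y z L : B) (N : ℕ) (hκ : ∀ u, ev (κ u) = u)
    (hx : ev x = 0) (hy : ev y = 0) (hz : ev z = 0) (hprime : Prime L) (d S : K)
    (hS : S = ∑ i : Fin n, c i.succ.succ.succ.succ) (hdS : d ≠ S)
    (hfer : L ^ N = z ^ (n + 4) + y ^ (n + 4) + κ d * x ^ (n + 4))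
    (hnd : ∀ u, u ≠ 0 → ¬ L ∣ κ u * x ^ (n + 1) * y * z) : False := by
  have hr0 : 0 < n + 4 := by omega
  obtain ⟨l, hl⟩ := IsAlgClosed.exists_pow_nat_eq ((d - S) / c 0) hr0
  obtain ⟨e, he⟩ := IsAlgClosed.exists_pow_nat_eq ((c 1)⁻¹) hr0
  obtain ⟨f, hf⟩ := IsAlgClosed.exists_pow_nat_eq ((c 2)⁻¹) hr0
  have hl0 : l ≠ 0 := by
    rintro rfl
    rw [zero_pow hr0.ne'] at hl
    exact (div_ne_zero (sub_ne_zero.2 hdS) (hc 0)) hl.symm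
  have he0 : e ≠ 0 := by
    rintro rfl
    rw [zero_pow hr0.ne'] at he
    exact (inv_ne_zero (hc 1)) he.symm
  have hf0 : f ≠ 0 := by
    rintro rfl
    rw [zero_pow hr0.ne'] at hf
    exact (inv_ne_zero (hc 2)) hf.symm
  let v : Fin (n + 4) → Polynomial B :=
    Fin.cons (Polynomial.C (κ l * x)) (Fin.cons (Polynomial.C (κ e * y))
      (Fin.cons (Polynomial.C (κ f * z)) (Fin.cons Polynomial.X (fun _ => Polynomial.C x))))
  let φ : MvPolynomial (Fin (n + 4)) K →+* Polynomial B := eval₂Hom (Polynomial.C.comp κ) v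
  have hv0 : v 0 = Polynomial.C (κ l * x) := rfl
  have hv1 : v 1 = Polynomial.C (κ e * y) := rfl
  have hv2 : v 2 = Polynomial.C (κ f * z) := rfl
  have hv3 : v 3 = Polynomial.X := rfl
  have hv4 : ∀ i : Fin n, v i.succ.succ.succ.succ = Polynomial.C x := fun i => rfl
  have hφ : φ (G * H) = Polynomial.C (L ^ N) +
      Polynomial.C (κ (c 3)) * Polynomial.X ^ (n + 4)
      - Polynomial.C (κ (l * e * f) * x ^ (n + 1) * y * z) * Polynomial.X := by
    have h1 : φ (G * H) = -(∏ i, v i) + ∑ i, Polynomial.C (κ (c i)) * v i ^ (n + 4) := by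
      rw [hGH]
      simp [φ]
    have hprod : ∏ i, v i = Polynomial.C (κ (l * e * f) * x ^ (n + 1) * y * z) * Polynomial.X := by
      rw [Fin.prod_univ_succ, Fin.prod_univ_succ, Fin.prod_univ_succ, Fin.prod_univ_succ]
      simp only [hv4]
      change v 0 * (v 1 * (v 2 * (v 3 * _))) = _
      rw [hv0, hv1, hv2, hv3]
      simp only [Finset.prod_const, Finset.card_univ, Fintype.card_fin, map_mul, map_pow]
      ring
    have hsum : ∑ i, Polynomial.C (κ (c i)) * v i ^ (n + 4) =
        Polynomial.C (L ^ N) +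
          Polynomial.C (κ (c 3)) * Polynomial.X ^ (n + 4) := by
      rw [Fin.sum_univ_succ, Fin.sum_univ_succ, Fin.sum_univ_succ, Fin.sum_univ_succ]
      simp only [hv4]
      rw [← Finset.sum_mul, ← map_sum, ← map_sum, ← hS]
      change Polynomial.C (κ (c 0)) * v 0 ^ (n + 4) + (Polynomial.C (κ (c 1)) * v 1 ^ (n + 4) +
        (Polynomial.C (κ (c 2)) * v 2 ^ (n + 4) + (Polynomial.C (κ (c 3)) * v 3 ^ (n + 4) + _))) = _
      rw [hv0, hv1, hv2, hv3, hfer]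
      have e0 : κ (c 0) * κ l ^ (n + 4) = κ d - κ S := by
        rw [← map_pow, hl, ← map_mul, ← map_sub, mul_div_cancel₀ _ (hc 0)]
      have e1 : κ (c 1) * κ e ^ (n + 4) = 1 := by
        rw [← map_pow, he, ← map_mul, mul_inv_cancel₀ (hc 1), map_one]
      have e2 : κ (c 2) * κ f ^ (n + 4) = 1 := by
        rw [← map_pow, hf, ← map_mul, mul_inv_cancel₀ (hc 2), map_one]
      have E : κ (c 0) * (κ l * x) ^ (n + 4) + κ (c 1) * (κ e * y) ^ (n + 4) +
          κ (c 2) * (κ f * z) ^ (n + 4) + κ S * x ^ (n + 4) =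
          z ^ (n + 4) + y ^ (n + 4) + κ d * x ^ (n + 4) := by
        rw [mul_pow, mul_pow, mul_pow]
        linear_combination x ^ (n + 4) * e0 + y ^ (n + 4) * e1 + z ^ (n + 4) * e2
      rw [← E]
      simp only [map_add, map_mul, map_pow]
      ring
    rw [h1, hprod, hsum]
    ring
  have hc0 : (φ G).coeff 0 * (φ H).coeff 0 = L ^ N := by
    rw [← Polynomial.mul_coeff_zero, ← map_mul, hφ, Polynomial.coeff_sub, Polynomial.coeff_add,
      Polynomial.coeff_C_zero]
    simp
  have hc1 : (φ G).coeff 0 * (φ H).coeff 1 + (φ G).coeff 1 * (φ H).coeff 0 =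
      -(κ (l * e * f) * x ^ (n + 1) * y * z) := by
    rw [← Polynomial.mul_coeff_one, ← map_mul, hφ]
    rw [Polynomial.coeff_sub, Polynomial.coeff_add, Polynomial.coeff_C_mul_X_pow,
      Polynomial.coeff_C_mul, Polynomial.coeff_X_one, Polynomial.coeff_C]
    simp
  -- evaluation at the origin
  have hev : ∀ P, ev ((φ P).coeff 0) = constantCoeff P := by
    have : (ev.comp Polynomial.constantCoeff).comp φ = constantCoeff := by
      apply MvPolynomial.ringHom_ext
      · intro a
        simp [φ, hκ]
      · intro i
        simp only [RingHom.comp_apply, φ, eval₂Hom_X', constantCoeff_X]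
        refine Fin.cases ?_ (fun i => ?_) i
        · simp [hv0, hx]
        refine Fin.cases ?_ (fun i => ?_) i
        · change ev (Polynomial.constantCoeff (v 1)) = 0
          simp [hv1, hy]
        refine Fin.cases ?_ (fun i => ?_) i
        · change ev (Polynomial.constantCoeff (v 2)) = 0
          simp [hv2, hz]
        refine Fin.cases ?_ (fun i => ?_) i
        · change ev (Polynomial.constantCoeff (v 3)) = 0
          simp [hv3]
        · simp [hv4, hx]
    intro P
    exact congrArg (fun g => g P) this
  have hnu : ∀ P, constantCoeff P = 0 → ¬ IsUnit ((φ P).coeff 0) := by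
    intro P hP hu
    have := hu.map ev
    rw [hev, hP] at this
    exact not_isUnit_zero this
  have hdvd : ∀ Q : B, ¬ IsUnit Q → Q ∣ L ^ N → L ∣ Q := by
    intro Q hQ hQd
    obtain ⟨i, -, hi⟩ := (dvd_prime_pow hprime _).1 hQd
    rcases Nat.eq_zero_or_pos i with h | h
    · subst h
      rw [pow_zero, associated_one_iff_isUnit] at hi
      exact absurd hi hQ
    · exact (dvd_pow_self _ h.ne').trans hi.symm.dvd
  have dG := hdvd _ (hnu G hG) ⟨_, hc0.symm⟩
  have dH := hdvd _ (hnu H hH) ⟨(φ G).coeff 0, by rw [← hc0, mul_comm]⟩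
  have hfin : L ∣ -(κ (l * e * f) * x ^ (n + 1) * y * z) := by
    rw [← hc1]
    exact dvd_add (dG.mul_right _) (dH.mul_left _)
  rw [dvd_neg] at hfin
  exact hnd (l * e * f) (by simp [hl0, he0, hf0]) hfin

lemma trinom_pow {B : Type*} [CommRing B] (p s t : ℕ) [Fact p.Prime] [CharP B p] (x y z k : B) :
    (z ^ t + y ^ t + k * x ^ t) ^ p ^ s =
      z ^ (p ^ s * t) + y ^ (p ^ s * t) + k ^ p ^ s * x ^ (p ^ s * t) := by
  rw [add_pow_char_pow, add_pow_char_pow, mul_pow, ← pow_mul, ← pow_mul, ← pow_mul, mul_comm t]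

/-- Core argument: the top form is not a product of forms of positive degree. -/
lemma core {K : Type*} [Field K] [IsAlgClosed K] (p n : ℕ) (hp : p.Prime) [CharP K p]
    (c : Fin (n + 4) → K) (hc : ∀ i, c i ≠ 0) (G H : MvPolynomial (Fin (n + 4)) K)
    (hG : constantCoeff G = 0) (hH : constantCoeff H = 0)
    (hGH : G * H = -(∏ i, X i) + ∑ i, C (c i) * X i ^ (n + 4)) : False := by
  have : Fact p.Prime := ⟨hp⟩
  obtain ⟨s, t, hpt, hst⟩ := Nat.exists_eq_pow_mul_and_not_dvd (n := n + 4) (by omega) p hp.ne_one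
  have htK : (t : K) ≠ 0 := fun h => hpt ((CharP.cast_eq_zero_iff K p t).1 h)
  have ht0 : 0 < t := by
    rcases Nat.eq_zero_or_pos t with h | h
    · subst h; simp at hpt
    · exact h
  obtain ⟨d, hd0, hdS⟩ := exists_ne_two (0 : K) (∑ i : Fin n, c i.succ.succ.succ.succ)
  obtain ⟨δ, hδ⟩ := IsAlgClosed.exists_pow_nat_eq d (pow_pos hp.pos s)
  have hδ0 : δ ≠ 0 := by
    rintro rfl
    rw [zero_pow (pow_pos hp.pos s).ne'] at hδ
    exact hd0 hδ.symm
  refine core_gen n c hc G H hG hH hGH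
    ((Polynomial.C.comp Polynomial.C).comp Polynomial.C : K →+* TriPoly K)
    ((Polynomial.constantCoeff.comp Polynomial.constantCoeff).comp Polynomial.constantCoeff)
    (Polynomial.C (Polynomial.C Polynomial.X)) (Polynomial.C Polynomial.X) Polynomial.X
    (fermat K t δ) (p ^ s) (by simp) (by simp) (by simp) (by simp)
    (fermat_irreducible t htK δ hδ0).prime d _ rfl hdS ?_ ?_
  · have hF : fermat K t δ = Polynomial.X ^ t + (Polynomial.C Polynomial.X) ^ t +
        Polynomial.C (Polynomial.C (Polynomial.C δ)) *
          (Polynomial.C (Polynomial.C Polynomial.X)) ^ t := by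
      simp [fermat, add_assoc]
    have h1 : CharP (Polynomial K) p := inferInstance
    have h2 : CharP (Polynomial (Polynomial K)) p :=
      charP_of_injective_ringHom (f := Polynomial.C) Polynomial.C_injective p
    have h3 : CharP (TriPoly K) p :=
      charP_of_injective_ringHom (f := Polynomial.C) Polynomial.C_injective p
    rw [hF]
    refine (trinom_pow (B := TriPoly K) p s t _ _ _ _).trans ?_
    rw [← hst, ← hδ]
    simp
  · intro u hu hdvd
    refine fermat_not_dvd t ht0 δ (n + 1) u hu ?_
    convert hdvd using 1
    simp

/-- For `k = r ≥ 4` and `p ∣ r`, the polynomial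
`V_{r,r} = -∏ X_i + ∑_{u=1}^r ∑_{i=1}^r a_u^{q^{i-1}} X_i^u + T(a_0)`
with coefficients `a_u ∈ F_{q^r}` and `a_r ≠ 0` is absolutely irreducible. -/
theorem stmt_6 (p m q r : ℕ) (hp : p.Prime) (hm : 0 < m) (hq : q = p ^ m)
    (hr : 4 ≤ r) (hpr : p ∣ r)
    (K : Type) [Field K] [IsAlgClosed K] [CharP K p]
    (a : ℕ → K) (hmem : ∀ u ≤ r, a u ^ q ^ r = a u) (har : a r ≠ 0) :
    Irreducible
      (-(∏ i : Fin r, X i) +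
        (∑ u ∈ Finset.Icc 1 r, ∑ i : Fin r, C (a u ^ q ^ (i : ℕ)) * X i ^ u) +
        C (∑ i ∈ Finset.range r, a 0 ^ q ^ i) : MvPolynomial (Fin r) K) := by
  obtain ⟨n, rfl⟩ : ∃ n, r = n + 4 := ⟨r - 4, by omega⟩
  set T : MvPolynomial (Fin (n + 4)) K := -(∏ i, X i) +
    ∑ i : Fin (n + 4), C (a (n + 4) ^ q ^ (i : ℕ)) * X i ^ (n + 4) with hT
  set V : MvPolynomial (Fin (n + 4)) K := -(∏ i : Fin (n + 4), X i) +
        (∑ u ∈ Finset.Icc 1 (n + 4), ∑ i : Fin (n + 4), C (a u ^ q ^ (i : ℕ)) * X i ^ u) +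
        C (∑ i ∈ Finset.range (n + 4), a 0 ^ q ^ i) with hV
  have hcomp : ∀ k, n + 4 ≤ k → homogeneousComponent k V = if k = n + 4 then T else 0 := by
    intro k hk
    have hprod : (∏ i : Fin (n + 4), X i : MvPolynomial (Fin (n + 4)) K).IsHomogeneous (n + 4) := by
      have := IsHomogeneous.prod (R := K) Finset.univ (fun i : Fin (n + 4) => X i) (fun _ => 1)
        (fun i _ => isHomogeneous_X K i)
      simpa using this
    have hu : ∀ u, (∑ i : Fin (n + 4), C (a u ^ q ^ (i : ℕ)) * X i ^ u :
        MvPolynomial (Fin (n + 4)) K).IsHomogeneous u := fun u =>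
      IsHomogeneous.sum _ _ _ fun i _ => isHomogeneous_C_mul_X_pow _ _ _
    rw [hV, map_add, map_add, map_neg, homogeneousComponent_of_mem hprod, map_sum,
      homogeneousComponent_of_mem (isHomogeneous_C _ _), if_neg (show k ≠ 0 by omega), add_zero,
      Finset.sum_congr rfl fun u _ => homogeneousComponent_of_mem (hu u), Finset.sum_ite_eq]
    by_cases h : k = n + 4
    · subst h
      simp [hT]
    · rw [if_neg h, if_neg h, if_neg (by rw [Finset.mem_Icc]; omega)]
      simp
  have hcore := core p n hp (fun i => a (n + 4) ^ q ^ (i : ℕ)) (fun i => pow_ne_zero _ har)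
  have hT0 : T ≠ 0 := by
    intro h
    exact hcore 0 0 (by simp) (by simp) (by rw [zero_mul]; exact h.symm)
  have hVT : homogeneousComponent (n + 4) V = T := by rw [hcomp _ le_rfl, if_pos rfl]
  have hV0 : V ≠ 0 := by
    intro h
    rw [h, map_zero] at hVT
    exact hT0 hVT.symm
  have hdle : n + 4 ≤ V.totalDegree := by
    by_contra h
    rw [homogeneousComponent_eq_zero _ _ (by omega)] at hVT
    exact hT0 hVT.symm
  have hpos : ∀ P : MvPolynomial (Fin (n + 4)) K, P ≠ 0 → ¬ IsUnit P → P.totalDegree ≠ 0 := by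
    intro P hP0 hP h
    apply hP
    rw [isUnit_iff_totalDegree_of_isReduced]
    refine ⟨?_, h⟩
    rw [isUnit_iff_ne_zero]
    intro h0
    rw [totalDegree_eq_zero_iff_eq_C, h0, C_0] at h
    exact hP0 h
  have hcc : ∀ P : MvPolynomial (Fin (n + 4)) K, P.totalDegree ≠ 0 →
      constantCoeff (homogeneousComponent P.totalDegree P) = 0 := by
    intro P hP
    rw [constantCoeff_eq, coeff_homogeneousComponent, if_neg]
    rw [map_zero]
    exact hP.symm
  constructor
  · intro hu
    rw [isUnit_iff_totalDegree_of_isReduced] at hu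
    omega
  · intro G H hGH
    by_contra hcon
    rw [not_or] at hcon
    have hG0 : G ≠ 0 := by rintro rfl; exact hV0 (by rw [hGH, zero_mul])
    have hH0 : H ≠ 0 := by rintro rfl; exact hV0 (by rw [hGH, mul_zero])
    have htd : V.totalDegree = G.totalDegree + H.totalDegree := by
      rw [hGH, totalDegree_mul_of_isDomain hG0 hH0]
    have htop := top_comp G H
    rw [← hGH, ← htd, hcomp _ hdle] at htop
    have cG := hcc G (hpos G hG0 hcon.1)
    have cH := hcc H (hpos H hH0 hcon.2)
    split_ifs at htop with hk
    · exact hcore _ _ cG cH htop.symm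
    · have hne : ∀ P : MvPolynomial (Fin (n + 4)) K, P ≠ 0 →
          homogeneousComponent P.totalDegree P ≠ 0 := by
        intro P hP h0
        obtain ⟨d, hd, hdd⟩ := Finset.exists_mem_eq_sup P.support
          (Finset.nonempty_iff_ne_empty.2 (by simpa using hP)) (fun s => s.sum fun _ e => e)
        have h1 := congrArg (coeff d) h0
        rw [coeff_homogeneousComponent, if_pos, coeff_zero] at h1
        · exact (mem_support_iff.1 hd) h1
        · exact hdd.symm
      rcases mul_eq_zero.1 htop.symm with h | h
      · exact hne G hG0 h
      · exact hne H hH0 h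
end

section
/- Let p be a prime, q = p^m, r ≥ 4 an integer, and a ∈ F_{q^r} with a ≠ 0. Then the homogeneous polynomial R(X_1,…,X_r) = −∏_{i=1}^r X_i + Σ_{i=1}^r a^{q^{i-1}} X_i^r is irreducible in F̄_q[X_1,…,X_r], where F̄_q is an algebraic closure of F_q containing F_{q^r}. -/
lemma genEis_hom {R K : Type*} [CommRing R] [IsDomain R] [Field K] (ψ : R →+* K)
    {q f : Polynomial R} {n : ℕ}
    (hq_irr : Irreducible (q.map ψ)) (hq : q.Monic) (hf : f.Monic)
    (hfd0 : 0 < f.natDegree)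
    (h1 : f.map ψ = q.map ψ ^ n)
    (h2 : (f.modByMonic q).map (Ideal.Quotient.mk ((RingHom.ker ψ) ^ 2)) ≠ 0) :
    Irreducible f := by
  letI := ψ.toAlgebra
  refine Polynomial.generalizedEisenstein (K := K) (q := q) (p := n) hq_irr hq hf.isPrimitive hfd0 ?_ ?_ h2
  · rw [hf.leadingCoeff]; simp
  · rw [hf.leadingCoeff]; rw [map_one, Polynomial.C_1, one_mul]; exact h1

section
open Polynomial

lemma fermat_irr {K : Type*} [Field K] [IsAlgClosed K] (s : ℕ) (hs : (s : K) ≠ 0)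
    (c d : K) (hc : c ≠ 0) (hd : d ≠ 0) :
    Irreducible (X ^ s + C (C c * X ^ s + C d) : K[X][X]) := by
  have hs0 : s ≠ 0 := by rintro rfl; simp at hs
  set g : K[X] := C c * X ^ s + C d with hg
  have hmon : (X ^ s + C g : K[X][X]).Monic := monic_X_pow_add_C g hs0
  have hnd : (X ^ s + C g : K[X][X]).natDegree = s := natDegree_X_pow_add_C
  obtain ⟨z, hz⟩ := IsAlgClosed.exists_pow_nat_eq (-d / c) (Nat.pos_of_ne_zero hs0)
  have hz' : c * z ^ s + d = 0 := by rw [hz]; field_simp; ring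
  have hz0 : z ≠ 0 := by
    rintro rfl
    rw [zero_pow hs0] at hz'
    simp [hd] at hz'
  have hP : (Ideal.span {X - C z} : Ideal K[X]).IsPrime :=
    (Ideal.span_singleton_prime (X_sub_C_ne_zero z)).2 (prime_X_sub_C z)
  refine irreducible_of_eisenstein_criterion hP ?_ ?_ ?_ ?_ hmon.isPrimitive
  · rw [hmon.leadingCoeff]
    exact fun h => hP.ne_top ((Ideal.eq_top_iff_one _).2 h)
  · intro n hn
    rw [degree_eq_natDegree hmon.ne_zero, hnd] at hn
    have hn : n < s := by exact_mod_cast hn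
    rw [coeff_add, coeff_X_pow, if_neg hn.ne, zero_add, coeff_C]
    split_ifs
    · rw [Ideal.mem_span_singleton, dvd_iff_isRoot]
      simp [hg, hz']
    · exact zero_mem _
  · rw [← natDegree_pos_iff_degree_pos, hnd]; omega
  · rw [coeff_add, coeff_X_pow, if_neg (Ne.symm hs0), zero_add, coeff_C_zero,
      Ideal.span_singleton_pow, Ideal.mem_span_singleton]
    rintro ⟨h, hh⟩
    have := congrArg (fun f => (derivative f).eval z) hh
    simp [hg, hs, hc, hz0, derivative_X_pow, derivative_pow] at this

lemma three_irr {K : Type*} [Field K] [IsAlgClosed K] (s n : ℕ) (hs : (s : K) ≠ 0)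
    (hn : 1 < n * s)
    (b c d e : K) (hc : c ≠ 0) (hd : d ≠ 0) (he : e ≠ 0) :
    Irreducible ((X ^ s + C (C (C b) * X ^ s + C (C c * X ^ s + C d))) ^ n
      - C (C (C e * X) * X) * X : K[X][X][X]) := by
  have hs0 : s ≠ 0 := by rintro rfl; simp at hs
  have hn0 : n ≠ 0 := by rintro rfl; simp at hn
  set w : K[X][X] := C (C b) * X ^ s + C (C c * X ^ s + C d) with hw
  set q : K[X][X][X] := X ^ s + C w with hq
  have hqm : q.Monic := monic_X_pow_add_C w hs0
  have hqd : q.natDegree = s := natDegree_X_pow_add_C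
  have hqnd : (q ^ n).natDegree = n * s := by rw [hqm.natDegree_pow, hqd]
  have hdl : (C (C (C e * X) * X) * X : K[X][X][X]).degree < (q ^ n).degree := by
    rw [degree_eq_natDegree (hqm.pow n).ne_zero, hqnd]
    refine (degree_C_mul_X_le _).trans_lt ?_
    exact_mod_cast hn
  have hfm : (q ^ n - C (C (C e * X) * X) * X).Monic := (hqm.pow n).sub_of_left hdl
  set ψ : K[X][X] →+* FractionRing K[X] :=
    (algebraMap K[X] (FractionRing K[X])).comp (evalRingHom 0) with hψ
  have hψX : ψ X = 0 := by simp [hψ]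
  have hker : RingHom.ker ψ = Ideal.span {X} := by
    ext x
    rw [RingHom.mem_ker, Ideal.mem_span_singleton, X_dvd_iff, hψ, RingHom.comp_apply,
      FaithfulSMul.algebraMap_eq_zero_iff, coe_evalRingHom, coeff_zero_eq_eval_zero]
  refine genEis_hom ψ (q := q) (n := n) ?_ hqm hfm ?_ ?_ ?_
  · have := (Monic.irreducible_iff_irreducible_map_fraction_map (K := FractionRing K[X])
      (monic_X_pow_add_C _ hs0)).1 (fermat_irr s hs c d hc hd)
    convert this using 1
    rw [hψ, ← Polynomial.map_map]
    congr 1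
    simp [hq, hw, hs0]
  · rw [natDegree_sub_eq_left_of_natDegree_lt, hqnd]
    · omega
    · exact natDegree_lt_natDegree (by 
        intro h; simp [he] at h) hdl
  · simp [hψX]
  · obtain ⟨u, i, hu0, hu⟩ : ∃ u : K[X][X], ∃ i, eval 0 u ≠ 0 ∧ 
      ((X : K[X][X][X]) %ₘ q).coeff i = u := by
      by_cases h1 : s = 1
      · refine ⟨-w, 0, ?_, ?_⟩
        · subst h1
          have : (C c * X + C d : K[X]) ≠ 0 := by
            intro h
            have := congrArg (fun f => coeff f 0) h
            simp [hd] at this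
          simp [hw]
          intro h
          exact this (by linear_combination -h)
        · have : (X : K[X][X][X]) %ₘ q = -C w := by
            have := (div_modByMonic_unique (f := X) (1 : K[X][X][X]) (-C w) hqm ⟨by
              rw [hq, h1]; ring, ?_⟩).2
            · exact this
            · rw [degree_neg, degree_eq_natDegree hqm.ne_zero, hqd, h1]
              exact degree_C_le.trans_lt (by norm_num)
          rw [this]; simp
      · refine ⟨1, 1, by simp, ?_⟩
        rw [(modByMonic_eq_self_iff hqm).2]
        · simp
        · rw [degree_eq_natDegree hqm.ne_zero, hqd, degree_X]
          exact_mod_cast (by omega : 1 < s)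
    intro h
    have hmod : (q ^ n - C (C (C e * X) * X) * X) %ₘ q
        = -(C (C (C e * X) * X) * (X %ₘ q)) := by
      rw [sub_modByMonic, (modByMonic_eq_zero_iff_dvd hqm).2 (dvd_pow_self q hn0), zero_sub,
        ← smul_eq_C_mul (C (C e * X) * X), smul_modByMonic, smul_eq_C_mul]
    have := congrArg (fun f => coeff f i) h
    rw [hmod] at this
    simp only [coeff_map, coeff_neg, coeff_C_mul, coeff_zero, hu] at this
    rw [Ideal.Quotient.eq_zero_iff_mem, hker, Ideal.span_singleton_pow,
      Ideal.mem_span_singleton] at this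
    obtain ⟨v, hv⟩ := this
    have h3 : C (C e * X) * u = X * -v := by
      apply mul_left_cancel₀ (X_ne_zero (R := K[X]))
      linear_combination -hv
    have := congrArg (eval 0) h3
    simp [he, hu0] at this

lemma three_irr' {K : Type*} [Field K] [IsAlgClosed K] (p : ℕ) [Fact p.Prime] [CharP K p]
    (r : ℕ) (hr : 1 < r)
    (b c d e : K) (hc : c ≠ 0) (hd : d ≠ 0) (he : e ≠ 0) :
    Irreducible (X ^ r + C (C (C b) * X ^ r + C (C c * X ^ r + C d))
      - C (C (C e * X) * X) * X : K[X][X][X]) := by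
  have hp : p.Prime := Fact.out
  obtain ⟨k, s, hps, rfl⟩ := Nat.exists_eq_pow_mul_and_not_dvd (show r ≠ 0 by omega) p hp.ne_one
  have hpk : 0 < p ^ k := pow_pos hp.pos k
  obtain ⟨b, rfl⟩ := IsAlgClosed.exists_pow_nat_eq b hpk
  obtain ⟨c, rfl⟩ := IsAlgClosed.exists_pow_nat_eq c hpk
  obtain ⟨d, rfl⟩ := IsAlgClosed.exists_pow_nat_eq d hpk
  have := three_irr s (p ^ k) (fun h => hps ((CharP.cast_eq_zero_iff K p s).1 h)) hr b c d e
    (by rintro rfl; exact hc (zero_pow hpk.ne')) (by rintro rfl; exact hd (zero_pow hpk.ne')) he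
  convert this using 2
  have e1 := add_pow_char_pow (p := p) (n := k) (X ^ s : K[X][X][X]) (C (C (C b) * X ^ s + C (C c * X ^ s + C d)))
  have e2 := add_pow_char_pow (p := p) (n := k) (C (C b) * X ^ s : K[X][X]) (C (C c * X ^ s + C d))
  have e3 := add_pow_char_pow (p := p) (n := k) (C c * X ^ s : K[X]) (C d)
  rw [e1, ← C_pow, e2, mul_pow, ← C_pow, ← C_pow, ← C_pow, e3,
    mul_pow, ← C_pow, ← C_pow, ← pow_mul, ← pow_mul, ← pow_mul, mul_comm s]
end

open MvPolynomial

theorem stmt_7 (p m q r : ℕ) (hp : p.Prime) (hm : 0 < m) (hq : q = p ^ m)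
    (hr : 4 ≤ r)
    (K : Type) [Field K] [IsAlgClosed K] [CharP K p]
    (a : K) (hmem : a ^ q ^ r = a) (ha : a ≠ 0) :
    Irreducible
      (-(∏ i : Fin r, X i) +
        ∑ i : Fin r, C (a ^ q ^ (i : ℕ)) * X i ^ r : MvPolynomial (Fin r) K) := by
  haveI : Fact p.Prime := ⟨hp⟩
  obtain ⟨l, rfl⟩ : ∃ l, r = l + 4 := ⟨r - 4, by omega⟩
  have hai : ∀ i : ℕ, a ^ q ^ i ≠ 0 := fun i => pow_ne_zero _ ha
  -- choose the specialisation of the fourth variable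
  obtain ⟨t, ht0, ht⟩ : ∃ t : K, t ≠ 0 ∧
      a ^ q ^ 3 * t ^ (l + 4) + ∑ i : Fin l, a ^ q ^ ((i : ℕ) + 4) ≠ 0 := by
    set S := ∑ i : Fin l, a ^ q ^ ((i : ℕ) + 4)
    classical
    obtain ⟨y, hy⟩ := Infinite.exists_notMem_finset ({0, S} : Finset K)
    simp only [Finset.mem_insert, Finset.mem_singleton, not_or] at hy
    obtain ⟨t, ht⟩ := IsAlgClosed.exists_pow_nat_eq ((y - S) / a ^ q ^ 3)
      (show 0 < l + 4 by omega)
    refine ⟨t, ?_, ?_⟩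
    · rintro rfl
      rw [zero_pow (by omega), eq_comm, div_eq_zero_iff] at ht
      rcases ht with h | h
      · exact hy.2 (sub_eq_zero.1 h)
      · exact hai 3 h
    · rw [ht, mul_div_cancel₀ _ (hai 3), sub_add_cancel]
      exact hy.1
  set d := a ^ q ^ 3 * t ^ (l + 4) + ∑ i : Fin l, a ^ q ^ ((i : ℕ) + 4) with hd
  rw [← MulEquiv.irreducible_iff (finSuccEquiv K (l + 3))]
  set F : Polynomial (MvPolynomial (Fin (l + 3)) K) := Polynomial.X ^ (l + 4) +
    Polynomial.C (C a⁻¹ * ∑ i : Fin (l + 3), C (a ^ q ^ ((i : ℕ) + 1)) * X i ^ (l + 4))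
    - Polynomial.C (C a⁻¹ * ∏ i : Fin (l + 3), X i) * Polynomial.X with hF
  have hu : IsUnit (Polynomial.C (C a) : Polynomial (MvPolynomial (Fin (l + 3)) K)) :=
    ((isUnit_iff_ne_zero.2 ha).map C).map Polynomial.C
  have hassoc : finSuccEquiv K (l + 3) (-(∏ i : Fin (l + 4), X i) +
        ∑ i : Fin (l + 4), C (a ^ q ^ (i : ℕ)) * X i ^ (l + 4)) = Polynomial.C (C a) * F := by
    have hCC : (Polynomial.C (C a) * Polynomial.C (C a⁻¹) :
        Polynomial (MvPolynomial (Fin (l + 3)) K)) = 1 := by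
      rw [← Polynomial.C_mul, ← C_mul, mul_inv_cancel₀ ha]; simp
    rw [Fin.prod_univ_succ, Fin.sum_univ_succ]
    simp only [map_add, map_neg, map_mul, map_prod, map_sum, map_pow, finSuccEquiv_X_zero,
      finSuccEquiv_X_succ, finSuccEquiv_apply, hF, Fin.val_succ, Fin.val_zero, pow_zero, pow_one]
    simp
    linear_combination (Polynomial.X * (∏ k : Fin (l + 3), Polynomial.C (X k)) -
      ∑ x : Fin (l + 3), Polynomial.C (C a) ^ q ^ ((x : ℕ) + 1) *
        Polynomial.C (X x) ^ (l + 4)) * hCC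
  rw [hassoc, irreducible_isUnit_mul hu]
  let v : Fin (l + 3) → Polynomial (Polynomial K) :=
    Fin.cons Polynomial.X (Fin.cons (Polynomial.C Polynomial.X)
      (Fin.cons (Polynomial.C (Polynomial.C t)) (fun _ => 1)))
  have hFm : F.Monic := by
    rw [hF, add_sub_assoc]
    apply Polynomial.monic_X_pow_add
    refine (Polynomial.degree_sub_le _ _).trans_lt (max_lt ?_ ?_)
    · exact Polynomial.degree_C_le.trans_lt (by exact_mod_cast (by omega : 0 < l + 4))
    · exact (Polynomial.degree_C_mul_X_le _).trans_lt (by exact_mod_cast (by omega : 1 < l + 4))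
  refine Polynomial.Monic.irreducible_of_irreducible_map
    (eval₂Hom (Polynomial.C.comp Polynomial.C) v) F hFm ?_
  have := three_irr' p (l + 4) (by omega) (a⁻¹ * a ^ q ^ 1) (a⁻¹ * a ^ q ^ 2) (a⁻¹ * d)
    (a⁻¹ * t) (mul_ne_zero (inv_ne_zero ha) (hai 2)) (mul_ne_zero (inv_ne_zero ha) ht)
    (mul_ne_zero (inv_ne_zero ha) ht0)
  convert this using 1
  have v0 : v 0 = Polynomial.X := rfl
  have v1 : v (Fin.succ 0) = Polynomial.C Polynomial.X := rfl
  have v2 : v (Fin.succ (Fin.succ 0)) = Polynomial.C (Polynomial.C t) := rfl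
  have v3 : ∀ i : Fin l, v i.succ.succ.succ = 1 := fun _ => rfl
  have hprod : eval₂Hom (Polynomial.C.comp Polynomial.C) v (∏ i : Fin (l + 3), X i) =
      Polynomial.X * (Polynomial.C Polynomial.X * Polynomial.C (Polynomial.C t)) := by
    rw [Fin.prod_univ_succ, Fin.prod_univ_succ, Fin.prod_univ_succ]
    simp only [map_mul, map_prod, coe_eval₂Hom, eval₂_X, v0, v1, v2, v3, Finset.prod_const_one,
      mul_one]
  have hsum : eval₂Hom (Polynomial.C.comp Polynomial.C) v
      (∑ i : Fin (l + 3), C (a ^ q ^ ((i : ℕ) + 1)) * X i ^ (l + 4)) =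
      Polynomial.C (Polynomial.C (a ^ q ^ 1)) * Polynomial.X ^ (l + 4) +
      (Polynomial.C (Polynomial.C (a ^ q ^ 2)) * Polynomial.C Polynomial.X ^ (l + 4) +
        Polynomial.C (Polynomial.C d)) := by
    rw [Fin.sum_univ_succ, Fin.sum_univ_succ, Fin.sum_univ_succ]
    simp only [map_mul, map_add, map_sum, coe_eval₂Hom, eval₂_X, eval₂_C, eval₂_pow, eval₂_mul,
      v0, v1, v2, v3, one_pow, mul_one, Fin.val_succ, Fin.val_zero, RingHom.comp_apply, hd,
      zero_add, map_pow, add_assoc]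
    norm_num
  simp only [hF, Polynomial.map_sub, Polynomial.map_add, Polynomial.map_mul, Polynomial.map_pow,
    Polynomial.map_X, Polynomial.map_C, map_mul _ (C a⁻¹), hprod, hsum]
  simp only [coe_eval₂Hom, eval₂_C, RingHom.comp_apply, map_mul, map_add, map_pow]
  ring
end

section
/- Let p be a prime, q = p^m, and let k, r be integers with 0 < k < r and r ≥ 3. Let a_0, a_1, …, a_k ∈ F_{q^r} with a_k ≠ 0. Then the polynomial V_{k,r}(X_1,…,X_r) = −∏_{i=1}^r X_i + Σ_{u=1}^{k} Σ_{i=1}^{r} a_u^{q^{i-1}} X_i^u + T(a_0) is irreducible in F̄_q[X_1,…,X_r]; that is, the variety V_{k,r} is absolutely irreducible. -/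
open MvPolynomial

lemma succ_succ_ne_zero_aux (n : ℕ) (i : Fin (n + 1)) : i.succ.succ ≠ (0 : Fin (n + 3)) :=
  Fin.succ_ne_zero _

lemma succ_succ_ne_one_aux (n : ℕ) (i : Fin (n + 1)) : i.succ.succ ≠ (1 : Fin (n + 3)) := by
  intro h
  rw [← Fin.succ_zero_eq_one, Fin.succ_inj] at h
  exact Fin.succ_ne_zero _ h

lemma notMem_vars_aux {σ K : Type*} [Field K] (i : σ) (P : MvPolynomial σ K)
    (h : P ∈ supported K ({i}ᶜ : Set σ)) : i ∉ P.vars := by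
  intro hi
  have := (mem_supported.1 h) (Finset.mem_coe.2 hi)
  simp at this

/-- The initial form is irreducible. -/
lemma irr_initial {K : Type*} [Field K] (n k : ℕ) (hk : 0 < k) (b c : K) (hb : b ≠ 0) (hc : c ≠ 0) :
    Irreducible (-(∏ i : Fin (n + 3), X i) + (C b * X 0 ^ k + C c * X 1 ^ k) :
      MvPolynomial (Fin (n + 3)) K) := by
  have h01 : (0 : Fin (n + 3)) ≠ 1 := by simp
  have h02 : (0 : Fin (n + 3)) ≠ (0 : Fin (n + 1)).succ.succ :=
    (succ_succ_ne_zero_aux n 0).symm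
  have h12 : (1 : Fin (n + 3)) ≠ (0 : Fin (n + 1)).succ.succ :=
    (succ_succ_ne_one_aux n 0).symm
  have key := irreducible_mul_X_add (n := Fin (n + 3)) (R := K)
    (-(∏ i ∈ Finset.univ.erase ((0 : Fin (n + 1)).succ.succ), X i)) (C b * X 0 ^ k + C c * X 1 ^ k)
    ((0 : Fin (n + 1)).succ.succ)
    ?_ ?_ ?_ ?_
  · convert key using 2
    rw [← Finset.prod_erase_mul Finset.univ _ (Finset.mem_univ ((0 : Fin (n + 1)).succ.succ))]
    ring
  · rw [neg_ne_zero, Finset.prod_ne_zero_iff]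
    intro i _
    exact X_ne_zero i
  · apply notMem_vars_aux
    refine neg_mem (prod_mem fun i hi => ?_)
    exact X_mem_supported.2 (by simpa using hi)
  · apply notMem_vars_aux
    refine add_mem (mul_mem (Subalgebra.algebraMap_mem _ _) (pow_mem (X_mem_supported.2 ?_) _))
      (mul_mem (Subalgebra.algebraMap_mem _ _) (pow_mem (X_mem_supported.2 ?_) _))
    · simpa using h02
    · simpa using h12
  · refine IsRelPrime.neg_left (IsRelPrime.prod_left fun i _ => ?_)
    rw [(X_prime (R := K) (i := i)).irreducible.isRelPrime_iff_not_dvd]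
    rintro ⟨Q, hQ⟩
    by_cases hi : i = 0
    · have := congrArg (eval (fun j => if j = 1 then (1 : K) else 0)) hQ
      simp [hi, h01, hk.ne', hc] at this
    · have := congrArg (eval (fun j => if j = 0 then (1 : K) else 0)) hQ
      simp [hi, h01.symm, hk.ne', hb] at this

/-- Transfer of irreducibility from the initial form. -/
lemma irr_of_initial {σ K : Type*} [Field K] (w : σ → ℕ) (F : MvPolynomial σ K)
    (φ : MvPolynomial σ K →ₐ[K] Polynomial (MvPolynomial σ K))
    (hφ : φ = aeval (fun i => Polynomial.C (X i) * Polynomial.X ^ w i))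
    (h : Irreducible (φ F).leadingCoeff) : Irreducible F := by
  have ev1 : ∀ P, (φ P).eval 1 = P := by
    intro P
    have : ((Polynomial.aeval (R := MvPolynomial σ K) (1 : MvPolynomial σ K)).restrictScalars K).comp φ
        = AlgHom.id K _ := by
      rw [hφ]; ext i; simp
    have := DFunLike.congr_fun this P
    simpa [Polynomial.aeval_def, Polynomial.eval₂_eq_eval_map] using this
  have ev0 : ∀ P, (φ P).map (constantCoeff (σ := σ) (R := K)) = Polynomial.C (constantCoeff P) := by
    intro P
    have : (Polynomial.mapRingHom (constantCoeff (σ := σ) (R := K))).comp (φ : MvPolynomial σ K →+* Polynomial (MvPolynomial σ K))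
        = (Polynomial.C).comp constantCoeff := by
      rw [hφ]
      apply MvPolynomial.ringHom_ext
      · intro r
        simp [Polynomial.algebraMap_apply, MvPolynomial.algebraMap_eq]
      · intro i; simp
    simpa using DFunLike.congr_fun this P
  have main : ∀ P, IsUnit (φ P).leadingCoeff → IsUnit P := by
    intro P hP
    have h2 : (constantCoeff (σ := σ) (R := K)) (φ P).leadingCoeff ≠ 0 := (hP.map _).ne_zero
    have h3 : (φ P).natDegree = 0 := by
      by_contra hne
      apply h2
      have := congrArg (fun p => Polynomial.coeff p (φ P).natDegree) (ev0 P)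
      simpa [Polynomial.coeff_map, Polynomial.coeff_C, hne] using this
    have h4 := Polynomial.eq_C_of_natDegree_eq_zero h3
    rw [← ev1 P, h4, Polynomial.eval_C]
    rwa [Polynomial.leadingCoeff, h3] at hP
  refine ⟨fun hu => h.not_isUnit ?_, fun {G H} hGH => ?_⟩
  · obtain ⟨c, hc, rfl⟩ := (isUnit_iff_eq_C_of_isReduced).1 hu
    rw [show φ (C c) = Polynomial.C (C c) by
      rw [hφ]; simp [Polynomial.algebraMap_apply, MvPolynomial.algebraMap_eq], Polynomial.leadingCoeff_C]
    exact hu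
  · subst hGH
    rw [map_mul, Polynomial.leadingCoeff_mul] at h
    exact (h.isUnit_or_isUnit rfl).imp (main _) (main _)

lemma irr_ge_two {K : Type*} [Field K] (n k : ℕ) (hk : 2 ≤ k) (hkn : k < n + 3)
    (b : ℕ → Fin (n + 3) → K) (hb : ∀ i, b k i ≠ 0) (c : K) :
    Irreducible
      (-(∏ i : Fin (n + 3), X i) +
        (∑ u ∈ Finset.Icc 1 k, ∑ i : Fin (n + 3), C (b u i) * X i ^ u) +
        C c : MvPolynomial (Fin (n + 3)) K) := by
  set w : Fin (n + 3) → ℕ := fun i => if i = 0 ∨ i = 1 then n + 1 else k - 2 with hw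
  have hwsum : ∑ i, w i = k * (n + 1) := by
    obtain ⟨l, rfl⟩ := Nat.exists_eq_add_of_le hk
    rw [Fin.sum_univ_succ, Fin.sum_univ_succ]
    have : ∀ i : Fin (n + 1), w i.succ.succ = l := by
      intro i
      simp only [hw, succ_succ_ne_zero_aux, succ_succ_ne_one_aux, or_self, if_false]
      omega
    simp only [this]
    simp [hw]
    ring
  have hwle : ∀ i, w i ≤ n + 1 := by
    intro i; simp only [hw]; split_ifs <;> omega
  have hlow : ∀ u ∈ Finset.Icc 1 k, ∀ i, w i * u ≤ k * (n + 1) := by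
    intro u hu i
    rw [mul_comm]
    exact Nat.mul_le_mul (Finset.mem_Icc.1 hu).2 (hwle i)
  have hne : ∀ u ∈ Finset.Icc 1 k, ∀ i, (k * (n + 1) = w i * u ↔ u = k ∧ (i = 0 ∨ i = 1)) := by
    intro u hu i
    rw [Finset.mem_Icc] at hu
    constructor
    · intro h
      have huk : u = k := by
        by_contra hne
        have : u < k := by omega
        have := hwle i
        nlinarith
      subst huk
      refine ⟨rfl, ?_⟩
      by_contra hi
      have : w i = u - 2 := by simp only [hw, if_neg hi]
      have h3 : w i < n + 1 := by omega
      nlinarith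
    · rintro ⟨rfl, hi⟩
      simp only [hw, if_pos hi]; ring
  set φ : MvPolynomial (Fin (n + 3)) K →ₐ[K] Polynomial (MvPolynomial (Fin (n + 3)) K) :=
    aeval (fun i => Polynomial.C (X i) * Polynomial.X ^ w i) with hφ
  have hφF : φ (-(∏ i : Fin (n + 3), X i) +
        (∑ u ∈ Finset.Icc 1 k, ∑ i : Fin (n + 3), C (b u i) * X i ^ u) + C c)
      = -(Polynomial.C (∏ i : Fin (n + 3), (X i : MvPolynomial (Fin (n + 3)) K)) * Polynomial.X ^ (k * (n + 1))) +
        (∑ u ∈ Finset.Icc 1 k, ∑ i : Fin (n + 3),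
          Polynomial.C (C (b u i) * X i ^ u) * Polynomial.X ^ (w i * u)) +
        Polynomial.C (C c) := by
    have hC : ∀ x, φ (C x) = Polynomial.C (C x) := by
      intro x
      simp [hφ, Polynomial.algebraMap_apply, MvPolynomial.algebraMap_eq]
    have hX : ∀ i, φ (X i) = Polynomial.C (X i) * Polynomial.X ^ w i := by
      intro i; simp [hφ]
    simp only [map_add, map_neg, map_sum, map_prod, map_mul, map_pow, hC, hX]
    rw [Finset.prod_mul_distrib, Finset.prod_pow_eq_pow_sum, hwsum]
    simp only [mul_pow, ← pow_mul, mul_assoc]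
  apply irr_of_initial w _ φ hφ
  have hdeg : (φ (-(∏ i : Fin (n + 3), X i) +
        (∑ u ∈ Finset.Icc 1 k, ∑ i : Fin (n + 3), C (b u i) * X i ^ u) + C c)).natDegree
          ≤ k * (n + 1) := by
    rw [hφF]
    refine Polynomial.natDegree_add_le_of_degree_le
      (Polynomial.natDegree_add_le_of_degree_le ?_ ?_) ?_
    · rw [Polynomial.natDegree_neg]
      exact Polynomial.natDegree_C_mul_X_pow_le _ _
    · refine Polynomial.natDegree_sum_le_of_forall_le _ _ fun u hu => ?_
      refine Polynomial.natDegree_sum_le_of_forall_le _ _ fun i _ => ?_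
      exact (Polynomial.natDegree_C_mul_X_pow_le _ _).trans (hlow u hu i)
    · simp
  have hcoeff : (φ (-(∏ i : Fin (n + 3), X i) +
        (∑ u ∈ Finset.Icc 1 k, ∑ i : Fin (n + 3), C (b u i) * X i ^ u) + C c)).coeff (k * (n + 1))
          = -(∏ i, X i) + (C (b k 0) * X 0 ^ k + C (b k 1) * X 1 ^ k) := by
    rw [hφF]
    have hpos : k * (n + 1) ≠ 0 := by positivity
    rw [Polynomial.coeff_add, Polynomial.coeff_add, Polynomial.coeff_neg,
      Polynomial.coeff_C_ne_zero hpos, Polynomial.coeff_C_mul_X_pow, if_pos rfl, add_zero]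
    congr 1
    simp only [Polynomial.finset_sum_coeff, Polynomial.coeff_C_mul_X_pow]
    rw [Finset.sum_eq_single k]
    · have hkk : k ∈ Finset.Icc 1 k := by simp; omega
      rw [Fin.sum_univ_succ, Fin.sum_univ_succ, Finset.sum_eq_zero]
      · rw [Fin.succ_zero_eq_one, if_pos ((hne k hkk _).2 ⟨rfl, Or.inl rfl⟩),
          if_pos ((hne k hkk _).2 ⟨rfl, Or.inr rfl⟩)]
        simp
      · intro i _
        rw [if_neg]
        rw [hne k hkk]
        simp only [succ_succ_ne_zero_aux, succ_succ_ne_one_aux, or_self, and_false, not_false_iff]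
    · intro u hu huk
      refine Finset.sum_eq_zero fun i _ => ?_
      rw [if_neg]
      rw [hne u hu]
      tauto
    · intro h
      exact absurd (by simp; omega) h
  have hirr := irr_initial n k (by omega) (b k 0) (b k 1) (hb 0) (hb 1)
  rw [← hcoeff] at hirr
  rw [Polynomial.leadingCoeff, le_antisymm hdeg (Polynomial.le_natDegree_of_ne_zero hirr.ne_zero)]
  exact hirr

lemma irr_one {K : Type*} [Field K] (n : ℕ)
    (b : Fin (n + 3) → K) (hb : ∀ i, b i ≠ 0) (c : K) :
    Irreducible
      (-(∏ i : Fin (n + 3), X i) + (∑ i : Fin (n + 3), C (b i) * X i) +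
        C c : MvPolynomial (Fin (n + 3)) K) := by
  have hL : Irreducible ((∑ i : Fin (n + 2), C (b i.succ) * X i.succ) + C c :
      MvPolynomial (Fin (n + 3)) K) := by
    have := irreducible_mul_X_add (n := Fin (n + 3)) (R := K) (C (b 1))
      ((∑ i : Fin (n + 1), C (b i.succ.succ) * X i.succ.succ) + C c) 1 ?_ ?_ ?_ ?_
    · convert this using 1
      rw [Fin.sum_univ_succ]
      simp [add_assoc]
    · simpa using hb 1
    · simp
    · apply notMem_vars_aux
      refine add_mem (sum_mem fun i _ => mul_mem (Subalgebra.algebraMap_mem _ _)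
        (X_mem_supported.2 ?_)) (Subalgebra.algebraMap_mem _ _)
      exact succ_succ_ne_one_aux n i
    · exact ((isUnit_iff_ne_zero.2 (hb 1)).map C).isRelPrime_left
  have key := irreducible_mul_X_add (n := Fin (n + 3)) (R := K)
    (C (b 0) - ∏ i : Fin (n + 2), X i.succ)
    ((∑ i : Fin (n + 2), C (b i.succ) * X i.succ) + C c) 0 ?_ ?_ ?_ ?_
  · convert key using 1
    rw [Fin.sum_univ_succ, Fin.prod_univ_succ]
    ring
  · intro h
    have := congrArg (eval (fun _ => (0 : K))) h
    simp [hb 0] at this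
  · apply notMem_vars_aux
    refine sub_mem (Subalgebra.algebraMap_mem _ _) (prod_mem fun i _ => X_mem_supported.2 ?_)
    simp
  · apply notMem_vars_aux
    refine add_mem (sum_mem fun i _ => mul_mem (Subalgebra.algebraMap_mem _ _)
        (X_mem_supported.2 ?_)) (Subalgebra.algebraMap_mem _ _)
    simp
  · refine IsRelPrime.symm ?_
    rw [hL.isRelPrime_iff_not_dvd]
    rintro ⟨Q, hQ⟩
    have := congrArg (eval (fun j : Fin (n + 3) => if j = 1 then -c / b 1 else (0 : K))) hQ
    have h2 : ∀ i : Fin (n + 1), i.succ.succ ≠ (1 : Fin (n + 3)) := by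
      exact succ_succ_ne_one_aux n
    simp only [map_mul, map_add, map_sub, map_sum, map_prod, eval_C, eval_X] at this
    rw [Fin.sum_univ_succ, Fin.prod_univ_succ, Fin.prod_univ_succ] at this
    simp only [h2, if_false] at this
    have hb1 := hb 1
    simp [hb 0] at this
    field_simp at this
    simp [hb 0] at this

/-- For `0 < k < r` and `r ≥ 3`, the polynomial
`V_{k,r} = -∏ X_i + ∑_{u=1}^k ∑_{i=1}^r a_u^{q^{i-1}} X_i^u + T(a_0)`
with coefficients `a_u ∈ F_{q^r}` and `a_k ≠ 0` is absolutely irreducible, i.e.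
irreducible over an algebraic closure of `F_q`. -/
theorem stmt_8 (p m q k r : ℕ) (hp : p.Prime) (hm : 0 < m) (hq : q = p ^ m)
    (hr : 3 ≤ r) (hk0 : 0 < k) (hkr : k < r)
    (K : Type) [Field K] [IsAlgClosed K] [CharP K p]
    (a : ℕ → K) (hmem : ∀ u ≤ k, a u ^ q ^ r = a u) (hak : a k ≠ 0) :
    Irreducible
      (-(∏ i : Fin r, X i) +
        (∑ u ∈ Finset.Icc 1 k, ∑ i : Fin r, C (a u ^ q ^ (i : ℕ)) * X i ^ u) +
        C (∑ i ∈ Finset.range r, a 0 ^ q ^ i) : MvPolynomial (Fin r) K) := by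
  clear hmem
  obtain ⟨n, rfl⟩ := Nat.exists_eq_add_of_le' hr
  generalize (∑ i ∈ Finset.range (n + 3), a 0 ^ q ^ i) = c
  rcases Nat.lt_or_ge k 2 with h | h
  · obtain rfl : k = 1 := by omega
    simpa using irr_one n (fun i => a 1 ^ q ^ (i : ℕ)) (fun i => pow_ne_zero _ hak) _
  · exact irr_ge_two n k h hkr (fun u i => a u ^ q ^ (i : ℕ)) (fun i => pow_ne_zero _ hak) _
end

section
/- Let q be a prime power, r ≥ 2, k ≥ 1 with k < q^{2r-1}, and let f ∈ F_{q^r}[x] be a nonzero polynomial of degree at most k having exactly s distinct roots in F_{q^r}. Then the codeword c = ev(f(x)) of the code C_{q,r,k}, obtained by evaluating the polynomial f(x) at all q^{2r-1} affine F_{q^r}-rational points of the Norm-Trace curve N_{q,r}, has weight w(c) = q^{2r-1} − s·q^{r-1}. -/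
/-- Every element fixed by the `q`-Frobenius has exactly `q^(r-1)` preimages under the trace. -/
theorem trace_fibre_card (p m r q : ℕ) (hp : p.Prime) (hm : 0 < m) (hr : 2 ≤ r) (hq : q = p ^ m)
    (F : Type) [Field F] [Fintype F] [DecidableEq F] (hF : Fintype.card F = q ^ r)
    (c : F) (hc : c ^ q = c) :
    Nat.card {y : F // c = ∑ i ∈ Finset.range r, y ^ q ^ i} = q ^ (r - 1) := by
  haveI : Fact p.Prime := ⟨hp⟩
  haveI : CharP F p := charP_of_card_eq_prime_pow (f := m * r) (by
    rw [hF, hq, pow_mul])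
  have hq1 : 1 < q := by rw [hq]; exact Nat.one_lt_pow hm.ne' hp.one_lt
  have hadd : ∀ (i : ℕ) (x y : F), (x + y) ^ q ^ i = x ^ q ^ i + y ^ q ^ i := by
    intro i x y
    rw [hq, ← pow_mul, add_pow_char_pow]
  let T : F →+ F :=
    { toFun := fun y => ∑ i ∈ Finset.range r, y ^ q ^ i
      map_zero' := by
        apply Finset.sum_eq_zero
        intro i _
        exact zero_pow (pow_pos (by omega) i).ne'
      map_add' := by
        intro x y
        rw [← Finset.sum_add_distrib]
        exact Finset.sum_congr rfl fun i _ => hadd i x y }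
  have hT : ∀ y, T y = ∑ i ∈ Finset.range r, y ^ q ^ i := fun y => rfl
  -- the image is fixed by Frobenius
  have hfix : ∀ y, (T y) ^ q = T y := by
    intro y
    have h1 : (T y) ^ q = ∑ i ∈ Finset.range r, y ^ q ^ (i + 1) := by
      rw [hT, hq, sum_pow_char_pow]
      refine Finset.sum_congr rfl fun i _ => ?_
      rw [← pow_mul, ← pow_succ]
    have h2 := Finset.sum_range_succ (fun i => y ^ q ^ i) r
    have h3 := Finset.sum_range_succ' (fun i => y ^ q ^ i) r
    rw [h2] at h3
    have h4 : y ^ q ^ r = y := by rw [← hF]; exact FiniteField.pow_card y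
    rw [h1, hT]
    simp only [h4, pow_zero, pow_one] at h3
    exact (add_right_cancel h3).symm
  -- the fixed points
  let S : Finset F := Finset.univ.filter fun c : F => c ^ q = c
  have hS : S.card ≤ q := by
    have hne : (Polynomial.X ^ q - Polynomial.X : Polynomial F) ≠ 0 :=
      FiniteField.X_pow_card_sub_X_ne_zero F hq1
    calc S.card ≤ (Polynomial.X ^ q - Polynomial.X : Polynomial F).roots.toFinset.card := by
          apply Finset.card_le_card
          intro c hc
          simp only [S, Finset.mem_filter] at hc
          simp [hne, hc.2]
      _ ≤ _ := Multiset.toFinset_card_le _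
      _ ≤ _ := Polynomial.card_roots' _
      _ = q := FiniteField.X_pow_card_sub_X_natDegree_eq F hq1
  have hker : Nat.card T.ker ≤ q ^ (r - 1) := by
    let g : Polynomial F := ∑ i ∈ Finset.range r, Polynomial.X ^ q ^ i
    have hg : g.natDegree ≤ q ^ (r - 1) := by
      apply Polynomial.natDegree_sum_le_of_forall_le
      intro i hi
      rw [Polynomial.natDegree_X_pow]
      exact Nat.pow_le_pow_right (by omega) (by have := Finset.mem_range.1 hi; omega)
    have hg0 : g ≠ 0 := by
      intro h
      have h1 : g.coeff 1 = 1 := by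
        simp only [g, Polynomial.finsetSum_coeff, Polynomial.coeff_X_pow]
        rw [Finset.sum_eq_single 0]
        · simp
        · intro i _ hi
          rw [if_neg]
          exact (Nat.one_lt_pow hi hq1).ne
        · intro h; exact absurd (Finset.mem_range.2 (by omega)) h
      rw [h] at h1
      simp at h1
    calc Nat.card T.ker = (Finset.univ.filter fun y : F => T y = 0).card := by
          rw [Nat.subtype_card]
          intro x; simp [AddMonoidHom.mem_ker]
      _ ≤ g.roots.toFinset.card := by
          apply Finset.card_le_card
          intro c hc
          simp only [Finset.mem_filter] at hc
          have := hc.2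
          rw [hT] at this
          simp [hg0, g, Polynomial.eval_finset_sum, this]
      _ ≤ _ := Multiset.toFinset_card_le _
      _ ≤ _ := Polynomial.card_roots' _
      _ ≤ _ := hg
  have hsub : Finset.univ.image T ⊆ S := by
    intro c hc
    obtain ⟨y, -, rfl⟩ := Finset.mem_image.1 hc
    simp [S, hfix]
  have hrange : Nat.card T.range = (Finset.univ.image T).card := by
    rw [Nat.subtype_card]
    intro x; simp
  have hmul : Nat.card T.ker * Nat.card T.range = q ^ (r - 1) * q := by
    have h1 := AddSubgroup.card_mul_index T.ker
    rw [AddSubgroup.index_ker, Nat.card_eq_fintype_card (α := F), hF] at h1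
    rw [h1, ← pow_succ]; congr 1; omega
  have hle := Finset.card_le_card hsub
  have hqp : 0 < q ^ (r - 1) := pow_pos (by omega) _
  have hr_le : Nat.card T.range ≤ q := by rw [hrange]; omega
  have hkeq : Nat.card T.ker = q ^ (r - 1) := by nlinarith
  have hreq : Nat.card T.range = q := by
    rw [hkeq] at hmul; exact Nat.eq_of_mul_eq_mul_left hqp hmul
  have himg : Finset.univ.image T = S := Finset.eq_of_subset_of_card_le hsub (by omega)
  have hcS : c ∈ S := by simp [S, hc]
  rw [← himg] at hcS
  obtain ⟨y0, -, hy0⟩ := Finset.mem_image.1 hcS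
  rw [← hkeq]
  refine Nat.card_congr ⟨fun y => ⟨y.1 - y0, ?_⟩, fun z => ⟨z.1 + y0, ?_⟩, ?_, ?_⟩
  · rw [AddMonoidHom.mem_ker, map_sub, hy0, hT, ← y.2, sub_self]
  · rw [← hT, map_add, hy0, AddMonoidHom.mem_ker.1 z.2, zero_add]
  · intro y; simp
  · intro z; simp

/-- The codeword of `C_{q,r,k}` given by evaluating a nonzero polynomial `f(x)` of degree
at most `k`, having exactly `s` distinct roots in `F_{q^r}`, at the affine
`F_{q^r}`-rational points of the Norm-Trace curve has weight `q^(2r-1) - s·q^(r-1)`. -/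
theorem stmt_10 (p m r k : ℕ) (hp : p.Prime) (hm : 0 < m) (hr : 2 ≤ r)
    (q : ℕ) (hq : q = p ^ m) (hk1 : 1 ≤ k) (hk2 : k < q ^ (2 * r - 1))
    (F : Type) [Field F] [Fintype F] [DecidableEq F] (hF : Fintype.card F = q ^ r)
    (f : Polynomial F) (hf : f ≠ 0) (hdeg : f.natDegree ≤ k)
    (s : ℕ) (hs : s = f.roots.toFinset.card) :
    Nat.card {P : F × F // P.1 ^ ((q ^ r - 1) / (q - 1)) =
        ∑ i ∈ Finset.range r, P.2 ^ q ^ i ∧ f.eval P.1 ≠ 0} =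
      q ^ (2 * r - 1) - s * q ^ (r - 1) := by
  have hq1 : 1 < q := by rw [hq]; exact Nat.one_lt_pow hm.ne' hp.one_lt
  have hN : ∀ x : F, (x ^ ((q ^ r - 1) / (q - 1))) ^ q = x ^ ((q ^ r - 1) / (q - 1)) := by
    intro x
    have hdvd : (q - 1) ∣ q ^ r - 1 := by simpa using Nat.sub_dvd_pow_sub_pow q 1 r
    have hqr : q ≤ q ^ r := Nat.le_self_pow (by omega) q
    have hpos : (q ^ r - 1) / (q - 1) ≠ 0 :=
      (Nat.div_pos (by omega) (by omega)).ne'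
    by_cases hx : x = 0
    · rw [hx, zero_pow hpos, zero_pow (by omega)]
    · have h1 : (x ^ ((q ^ r - 1) / (q - 1))) ^ (q - 1) = 1 := by
        rw [← pow_mul, Nat.div_mul_cancel hdvd, ← hF]
        exact FiniteField.pow_card_sub_one_eq_one x hx
      calc _ = (x ^ ((q ^ r - 1) / (q - 1))) ^ (q - 1 + 1) := by congr 1; omega
        _ = _ := by rw [pow_succ, h1, one_mul]
  have e : {P : F × F // P.1 ^ ((q ^ r - 1) / (q - 1)) =
        ∑ i ∈ Finset.range r, P.2 ^ q ^ i ∧ f.eval P.1 ≠ 0} ≃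
      Σ x : {x : F // f.eval x ≠ 0},
        {y : F // x.1 ^ ((q ^ r - 1) / (q - 1)) = ∑ i ∈ Finset.range r, y ^ q ^ i} :=
    ⟨fun P => ⟨⟨P.1.1, P.2.2⟩, ⟨P.1.2, P.2.1⟩⟩, fun z => ⟨(z.1.1, z.2.1), z.2.2, z.1.2⟩,
      fun _ => rfl, fun _ => rfl⟩
  rw [Nat.card_congr e, Nat.card_sigma]
  rw [Finset.sum_congr rfl fun x _ => trace_fibre_card p m r q hp hm hr hq F hF _ (hN x.1)]
  rw [Finset.sum_const, smul_eq_mul, Finset.card_univ, ← Nat.card_eq_fintype_card]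
  have h2 : Nat.card {x : F // f.eval x ≠ 0} = q ^ r - s := by
    rw [Nat.subtype_card (f.roots.toFinset)ᶜ, Finset.card_compl, hF, hs]
    intro x; simp [hf]
  rw [h2, Nat.sub_mul, ← pow_add]
  congr 2; omega
end

section
/- Let q be a prime power and let H be the Hermitian curve over F_{q²} with affine equation x^{q+1} = y^q + y. For any m, c ∈ F_{q²}, the number of points x ∈ F_{q²} satisfying x^{q+1} = (mx + c)^q + (mx + c) (i.e., the number of affine F_{q²}-points in the intersection of H with the line y = mx + c) is either 1 or q + 1. -/
/-- A line `y = mx + c` of the affine plane meets the Hermitian curve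
`x^{q+1} = y^q + y` over `F_{q²}` in either `1` or `q + 1` points. -/
theorem stmt_13 (p e : ℕ) (hp : p.Prime) (he : 0 < e) (q : ℕ) (hq : q = p ^ e)
    (F : Type) [Field F] [Fintype F] (hF : Fintype.card F = q ^ 2)
    (m c : F) :
    Nat.card {x : F // x ^ (q + 1) = (m * x + c) ^ q + (m * x + c)} = 1 ∨
      Nat.card {x : F // x ^ (q + 1) = (m * x + c) ^ q + (m * x + c)} = q + 1 := by
  classical
  have : Fact p.Prime := ⟨hp⟩
  have : CharP F p := by
    apply charP_of_card_eq_prime_pow (f := e * 2)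
    rw [hF, hq, pow_mul]
  have hadd : ∀ a b : F, (a + b) ^ q = a ^ q + b ^ q := by
    intro a b; rw [hq]; exact add_pow_char_pow a b p e
  have hqq : ∀ a : F, (a ^ q) ^ q = a := by
    intro a
    rw [← pow_mul, ← sq, ← hF]; exact FiniteField.pow_card a
  have hq2 : 2 ≤ q := by
    rw [hq]; exact le_trans hp.two_le (Nat.le_self_pow he.ne' p)
  obtain ⟨k, hk⟩ : ∃ k, k = c ^ q + c + m ^ (q + 1) := ⟨_, rfl⟩
  have hkq : k ^ q = k := by
    rw [hk, hadd, hadd, hqq, pow_succ, mul_pow, hqq]; ring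
  have key : Nat.card {x : F // x ^ (q + 1) = (m * x + c) ^ q + (m * x + c)}
      = Nat.card {z : F // z ^ (q + 1) = k} := by
    apply Nat.card_congr
    refine Equiv.subtypeEquiv (Equiv.subRight (m ^ q)) ?_
    intro x
    have h1 : (x - m ^ q) ^ q = x ^ q - m := by
      have := hadd (x - m ^ q) (m ^ q)
      rw [hqq, sub_add_cancel] at this
      rw [this]; ring
    simp only [Equiv.subRight_apply]
    rw [pow_succ (x - m ^ q), h1, hk, hadd, mul_pow, pow_succ, pow_succ]
    constructor <;> intro h <;> linear_combination h
  rw [key]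
  by_cases h0 : k = 0
  · left
    have : ∀ z : F, z ^ (q + 1) = k ↔ z = 0 := by
      intro z; rw [h0]; exact pow_eq_zero_iff (by omega)
    simp [this]
  · right
    obtain ⟨g, hg⟩ := IsCyclic.exists_generator (α := Fˣ)
    have hord : orderOf g = (q - 1) * (q + 1) := by
      rw [orderOf_eq_card_of_forall_mem_zpowers hg, Nat.card_eq_fintype_card,
        Fintype.card_units, hF]
      obtain ⟨r, rfl⟩ : ∃ r, q = r + 1 := ⟨q - 1, by omega⟩
      rw [Nat.add_sub_cancel]
      apply Nat.sub_eq_of_eq_add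
      ring
    have hprim : IsPrimitiveRoot ((g ^ (q - 1) : Fˣ) : F) (q + 1) := by
      rw [IsPrimitiveRoot.coe_units_iff]
      have h := IsPrimitiveRoot.orderOf g
      exact h.pow (orderOf_pos g) hord
    obtain ⟨j, hj⟩ := (mem_powers_iff_mem_zpowers).2 (hg (Units.mk0 k h0))
    have hj1 : g ^ (j * (q - 1)) = 1 := by
      rw [pow_mul]
      simp only at hj
      rw [hj]
      ext
      simp only [Units.val_pow_eq_pow_val, Units.val_mk0, Units.val_one]
      apply mul_right_cancel₀ h0
      rw [← pow_succ, Nat.sub_add_cancel (by omega), hkq, one_mul]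
    have hdvd : (q + 1) ∣ j := by
      have := orderOf_dvd_of_pow_eq_one hj1
      rw [hord, mul_comm j] at this
      exact Nat.dvd_of_mul_dvd_mul_left (by omega) this
    obtain ⟨i, rfl⟩ := hdvd
    have hex : ∃ α : F, α ^ (q + 1) = k := by
      refine ⟨((g ^ i : Fˣ) : F), ?_⟩
      rw [← Units.val_pow_eq_pow_val, ← pow_mul, mul_comm i]
      simp only at hj
      rw [hj, Units.val_mk0]
    have hcard := hprim.card_nthRoots k
    rw [if_pos hex] at hcard
    have hnd := hprim.nthRoots_nodup h0
    rw [← Multiset.toFinset_card_of_nodup hnd] at hcard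
    rw [Nat.card_eq_fintype_card]
    refine Eq.trans ?_ hcard
    apply Fintype.card_of_subtype
    intro x
    rw [Multiset.mem_toFinset, Polynomial.mem_nthRoots (by omega)]
end

section
/- Let q > 7 be an odd prime power, let H = {(x,y) ∈ F_{q²}² : x^{q+1} = y^q + y} be the set of affine F_{q²}-points of the Hermitian curve, and let C be the linear code over F_{q²} whose codewords are the evaluation vectors (F(P))_{P ∈ H} of the polynomials F ∈ F_{q²}[x,y] of total degree at most 2. Let F ∈ F_{q²}[x,y] have total degree 2 and be irreducible over the algebraic closure of F_{q²} (i.e., F defines an irreducible conic), and suppose that F vanishes at at least 5 points of H. Then the codeword ev(F) = (F(P))_{P ∈ H} is a minimal codeword of C: every G ∈ F_{q²}[x,y] of total degree at most 2 whose evaluation vector ev(G) has support contained in the support of ev(F) satisfies ev(G) = λ·ev(F) for some λ ∈ F_{q²}. -/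
open MvPolynomial

/-- The value of a conic with given coefficients. -/
def cev {K : Type} [Field K] (a b c d e f x y : K) : K :=
  a * x ^ 2 + b * (x * y) + c * y ^ 2 + d * x + e * y + f

/-- Collinearity of three points. -/
def col {K : Type} [Field K] (P Q R : K × K) : Prop :=
  (Q.1 - P.1) * (R.2 - P.2) = (Q.2 - P.2) * (R.1 - P.1)

/-- The polynomial with given coefficients. -/
noncomputable def cpoly {K : Type} [Field K] (a b c d e f : K) : MvPolynomial (Fin 2) K :=
  C a * X 0 ^ 2 + C b * (X 0 * X 1) + C c * X 1 ^ 2 + C d * X 0 + C e * X 1 + C f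

lemma cpoly_exists {K : Type} [Field K] (F : MvPolynomial (Fin 2) K) (h : F.totalDegree ≤ 2) :
    ∃ a b c d e f : K, F = cpoly a b c d e f := by
  rw [F.as_sum]
  apply Finset.sum_induction _ (fun F => ∃ a b c d e f : K, F = cpoly a b c d e f)
  · rintro _ _ ⟨a, b, c, d, e, f, rfl⟩ ⟨a', b', c', d', e', f', rfl⟩
    refine ⟨a + a', b + b', c + c', d + d', e + e', f + f', ?_⟩
    simp only [cpoly, C_add]; ring
  · exact ⟨0, 0, 0, 0, 0, 0, by simp [cpoly]⟩
  · intro m hm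
    have h1 := (le_totalDegree hm).trans h
    rw [Finsupp.sum_fintype _ _ (by simp), Fin.sum_univ_two] at h1
    generalize coeff m F = r
    rw [monomial_eq, Finsupp.prod_fintype _ _ (by simp), Fin.prod_univ_two]
    generalize m 0 = i at *
    generalize m 1 = j at *
    have hi : i ≤ 2 := by omega
    have hj : j ≤ 2 := by omega
    interval_cases i <;> interval_cases j <;> first | omega | skip
    · exact ⟨0, 0, 0, 0, 0, r, by simp [cpoly]⟩
    · exact ⟨0, 0, 0, 0, r, 0, by simp [cpoly]⟩
    · exact ⟨0, 0, r, 0, 0, 0, by simp [cpoly]⟩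
    · exact ⟨0, 0, 0, r, 0, 0, by simp [cpoly]⟩
    · exact ⟨0, r, 0, 0, 0, 0, by simp [cpoly]⟩
    · exact ⟨r, 0, 0, 0, 0, 0, by simp [cpoly]⟩

lemma eval_cpoly {K : Type} [Field K] (a b c d e f x y : K) :
    MvPolynomial.eval ![x, y] (cpoly a b c d e f) = cev a b c d e f x y := by
  simp [cpoly, cev]

lemma quad_zero {K : Type} [Field K] (A B D x y z : K) (hxy : x ≠ y) (hxz : x ≠ z) (hyz : y ≠ z)
    (hx : A * x ^ 2 + B * x + D = 0) (hy : A * y ^ 2 + B * y + D = 0)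
    (hz : A * z ^ 2 + B * z + D = 0) : A = 0 ∧ B = 0 ∧ D = 0 := by
  have h1 : A * (x + y) + B = 0 := by
    apply mul_left_cancel₀ (sub_ne_zero.2 hxy); linear_combination hx - hy
  have h2 : A * (x + z) + B = 0 := by
    apply mul_left_cancel₀ (sub_ne_zero.2 hxz); linear_combination hx - hz
  have h3 : A = 0 := by
    apply mul_left_cancel₀ (sub_ne_zero.2 hyz); linear_combination h1 - h2
  subst h3
  have h4 : B = 0 := by linear_combination h1
  subst h4
  exact ⟨rfl, rfl, by linear_combination hx⟩

lemma factor_aux {K : Type} [Field K] (a b c d e f : K) (P Q R : K × K)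
    (hPQ : P.1 ≠ Q.1) (hPR : P ≠ R) (hQR : Q ≠ R) (hc : col P Q R)
    (hP : cev a b c d e f P.1 P.2 = 0) (hQ : cev a b c d e f Q.1 Q.2 = 0)
    (hR : cev a b c d e f R.1 R.2 = 0) :
    ∃ u v w m n k : K, (u ≠ 0 ∨ v ≠ 0) ∧ u * P.1 + v * P.2 + w = 0 ∧ u * Q.1 + v * Q.2 + w = 0 ∧
      a = u * m ∧ b = u * n + v * m ∧ c = v * n ∧ d = u * k + w * m ∧ e = v * k + w * n ∧
      f = w * k := by
  obtain ⟨x1, y1⟩ := P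
  obtain ⟨x2, y2⟩ := Q
  obtain ⟨x3, y3⟩ := R
  simp only [col, cev, ne_eq, Prod.mk.injEq] at *
  have h21 : x2 - x1 ≠ 0 := sub_ne_zero.2 (Ne.symm hPQ)
  obtain ⟨α, hα⟩ : ∃ α, y2 - y1 = α * (x2 - x1) := ⟨(y2 - y1) / (x2 - x1), by field_simp⟩
  obtain ⟨β, hβ⟩ : ∃ β, β = y1 - α * x1 := ⟨_, rfl⟩
  have e1 : y1 = α * x1 + β := by rw [hβ]; ring
  have e2 : y2 = α * x2 + β := by linear_combination hα - hβ
  have e3 : y3 = α * x3 + β := by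
    apply mul_left_cancel₀ h21
    linear_combination hc + (x3 - x1) * hα - (x2 - x1) * hβ
  clear hα hβ hc
  subst e1 e2 e3
  have h13 : x1 ≠ x3 := fun h => hPR ⟨h, by rw [h]⟩
  have h23 : x2 ≠ x3 := fun h => hQR ⟨h, by rw [h]⟩
  obtain ⟨hA, hB, hD⟩ := quad_zero (a + b * α + c * α ^ 2) (b * β + 2 * c * α * β + d + e * α)
    (c * β ^ 2 + e * β + f) x1 x2 x3 hPQ h13 h23 (by linear_combination hP)
    (by linear_combination hQ) (by linear_combination hR)
  refine ⟨-α, 1, -β, b + α * c, c, e + β * c, Or.inr one_ne_zero, by ring, by ring, ?_, by ring,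
    by ring, ?_, by ring, ?_⟩
  · linear_combination hA
  · linear_combination hB
  · linear_combination hD

lemma factor {K : Type} [Field K] (a b c d e f : K) (P Q R : K × K)
    (hPQ : P ≠ Q) (hPR : P ≠ R) (hQR : Q ≠ R) (hc : col P Q R)
    (hP : cev a b c d e f P.1 P.2 = 0) (hQ : cev a b c d e f Q.1 Q.2 = 0)
    (hR : cev a b c d e f R.1 R.2 = 0) :
    ∃ u v w m n k : K, (u ≠ 0 ∨ v ≠ 0) ∧ u * P.1 + v * P.2 + w = 0 ∧ u * Q.1 + v * Q.2 + w = 0 ∧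
      a = u * m ∧ b = u * n + v * m ∧ c = v * n ∧ d = u * k + w * m ∧ e = v * k + w * n ∧
      f = w * k := by
  by_cases h : P.1 = Q.1
  · have h2 : P.2 ≠ Q.2 := fun h2 => hPQ (Prod.ext h h2)
    have hs : ∀ x y, cev c b a e d f y x = cev a b c d e f x y := by
      intro x y; simp only [cev]; ring
    obtain ⟨u, v, w, m, n, k, h0, h1, h2, h3, h4, h5, h6, h7, h8⟩ :=
      factor_aux c b a e d f P.swap Q.swap R.swap h2 (fun h => hPR (Prod.swap_injective h))
        (fun h => hQR (Prod.swap_injective h)) (by simp only [col, Prod.fst_swap, Prod.snd_swap] at *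
                                                   exact hc.symm)
        (by rw [← hP, ← hs]; rfl) (by rw [← hQ, ← hs]; rfl) (by rw [← hR, ← hs]; rfl)
    simp only [Prod.fst_swap, Prod.snd_swap] at h1 h2
    exact ⟨v, u, w, n, m, k, h0.symm, by linear_combination h1, by linear_combination h2, h5,
      by linear_combination h4, h3, h7, h6, h8⟩
  · exact factor_aux a b c d e f P Q R h hPR hQR hc hP hQ hR

lemma not_unit_lin {K : Type} [Field K] (u v w : K) (h : IsUnit
    (MvPolynomial.map (algebraMap K (AlgebraicClosure K)) (C u * X 0 + C v * X 1 + C w :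
      MvPolynomial (Fin 2) K))) : u = 0 ∧ v = 0 := by
  rw [MvPolynomial.isUnit_iff_eq_C_of_isReduced] at h
  obtain ⟨r, -, hr⟩ := h
  have ev : ∀ x y : AlgebraicClosure K, algebraMap K _ u * x + algebraMap K _ v * y
      + algebraMap K _ w = r := by
    intro x y
    have := congrArg (MvPolynomial.eval ![x, y]) hr
    simpa using this
  have h0 := ev 0 0
  have h1 := ev 1 0
  have h2 := ev 0 1
  constructor
  · apply (algebraMap K (AlgebraicClosure K)).injective
    rw [map_zero]; linear_combination h1 - h0
  · apply (algebraMap K (AlgebraicClosure K)).injective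
    rw [map_zero]; linear_combination h2 - h0

lemma no_factor {K : Type} [Field K] (F : MvPolynomial (Fin 2) K) (hdeg : F.totalDegree = 2)
    (hirr : Irreducible (MvPolynomial.map (algebraMap K (AlgebraicClosure K)) F))
    (u v w m n k : K) (h0 : u ≠ 0 ∨ v ≠ 0)
    (hF : F = cpoly (u * m) (u * n + v * m) (v * n) (u * k + w * m) (v * k + w * n) (w * k)) :
    False := by
  have hfac : F = (C u * X 0 + C v * X 1 + C w) * (C m * X 0 + C n * X 1 + C k) := by
    rw [hF]; simp only [cpoly, C_add, C_mul]; ring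
  rw [hfac, map_mul] at hirr
  rcases hirr.isUnit_or_isUnit rfl with h | h
  · have := not_unit_lin _ _ _ h
    tauto
  · obtain ⟨rfl, rfl⟩ := not_unit_lin _ _ _ h
    have : F.totalDegree ≤ 1 := by
      rw [hfac]
      refine (totalDegree_mul _ _).trans ?_
      have e2 : (C (0 : K) * X 0 + C 0 * X 1 + C k : MvPolynomial (Fin 2) K) = C k := by simp
      rw [e2, totalDegree_C, add_zero]
      refine (totalDegree_add _ _).trans (max_le ((totalDegree_add _ _).trans (max_le ?_ ?_)) ?_)
      · exact (totalDegree_mul _ _).trans (by simp)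
      · exact (totalDegree_mul _ _).trans (by simp)
      · simp
    omega

lemma col_of_line {K : Type} [Field K] (u v w : K) (P Q R : K × K) (h : u ≠ 0 ∨ v ≠ 0)
    (hP : u * P.1 + v * P.2 + w = 0) (hQ : u * Q.1 + v * Q.2 + w = 0)
    (hR : u * R.1 + v * R.2 + w = 0) : col P Q R := by
  unfold col
  rcases h with h | h
  · apply mul_left_cancel₀ h
    linear_combination (R.2 - P.2) * (hQ - hP) - (Q.2 - P.2) * (hR - hP)
  · apply mul_left_cancel₀ h
    linear_combination (Q.1 - P.1) * (hR - hP) - (R.1 - P.1) * (hQ - hP)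

/-- Let `q > 7` be odd and let `F` define an irreducible conic (degree-2 polynomial,
irreducible over the algebraic closure) meeting the Hermitian curve
`x^{q+1} = y^q + y` over `F_{q²}` in at least `5` points. Then the evaluation of `F`
at the affine points of the Hermitian curve is a minimal codeword of the code of
evaluations of polynomials of total degree at most `2`. -/
theorem stmt_14 (p e q : ℕ) (hp : p.Prime) (he : 0 < e) (hq : q = p ^ e)
    (hodd : Odd q) (hq7 : 7 < q)
    (K : Type) [Field K] [Fintype K] (hK : Fintype.card K = q ^ 2)
    (F : MvPolynomial (Fin 2) K) (hdeg : F.totalDegree = 2)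
    (hirr : Irreducible (MvPolynomial.map (algebraMap K (AlgebraicClosure K)) F))
    (hpts : 5 ≤ Nat.card {P : K × K // P.1 ^ (q + 1) = P.2 ^ q + P.2 ∧
        MvPolynomial.eval ![P.1, P.2] F = 0}) :
    ∀ G : MvPolynomial (Fin 2) K, G.totalDegree ≤ 2 →
      (∀ x y : K, x ^ (q + 1) = y ^ q + y →
        MvPolynomial.eval ![x, y] G ≠ 0 → MvPolynomial.eval ![x, y] F ≠ 0) →
      ∃ l : K, ∀ x y : K, x ^ (q + 1) = y ^ q + y →
        MvPolynomial.eval ![x, y] G = l * MvPolynomial.eval ![x, y] F := by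
  intro G hG hsup
  obtain ⟨a, b, c, d, e', f, hF⟩ := cpoly_exists F hdeg.le
  obtain ⟨a', b', c', d', e'', f', rfl⟩ := cpoly_exists G hG
  classical
  obtain ⟨pt⟩ : Nonempty (Fin 5 ↪ {P : K × K // P.1 ^ (q + 1) = P.2 ^ q + P.2 ∧
        MvPolynomial.eval ![P.1, P.2] F = 0}) := by
    apply Function.Embedding.nonempty_of_card_le
    rw [Fintype.card_fin, ← Nat.card_eq_fintype_card]
    exact hpts
  have hne : ∀ i j, i ≠ j → (pt i).1 ≠ (pt j).1 := fun i j hij h =>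
    hij (pt.injective (Subtype.ext h))
  have hFz : ∀ i, cev a b c d e' f (pt i).1.1 (pt i).1.2 = 0 := fun i => by
    rw [← eval_cpoly, ← hF]; exact (pt i).2.2
  have hGz : ∀ i, cev a' b' c' d' e'' f' (pt i).1.1 (pt i).1.2 = 0 := fun i => by
    rw [← eval_cpoly]
    by_contra hh
    exact hsup _ _ (pt i).2.1 hh (pt i).2.2
  generalize hp' : (fun i => (pt i).1) = Pt at *
  have hpt : ∀ i, (pt i).1 = Pt i := fun i => by rw [← hp']
  simp only [hpt] at hne hFz hGz
  have key : ∀ P Q R : K × K, P ≠ Q → P ≠ R → Q ≠ R → cev a b c d e' f P.1 P.2 = 0 →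
      cev a b c d e' f Q.1 Q.2 = 0 → cev a b c d e' f R.1 R.2 = 0 → ¬ col P Q R := by
    intro P Q R h1 h2 h3 hP hQ hR hc
    obtain ⟨u, v, w, m, n, k, h0, -, -, rfl, rfl, rfl, rfl, rfl, rfl⟩ :=
      factor a b c d e' f P Q R h1 h2 h3 hc hP hQ hR
    exact no_factor F hdeg hirr u v w m n k h0 hF
  obtain ⟨t, ht⟩ : ∃ t : K, t ∉ ({0, 1} : Finset K) := by
    by_contra! hh
    have h1 : Fintype.card K ≤ ({0, 1} : Finset K).card :=
      Finset.card_le_card (fun x _ => hh x)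
    have h2 := Finset.card_le_two (a := (0 : K)) (b := 1)
    nlinarith
  simp only [Finset.mem_insert, Finset.mem_singleton, not_or] at ht
  obtain ⟨R, hR⟩ : ∃ R : K × K, R = (Pt 0) + t • (Pt 1 - Pt 0) := ⟨_, rfl⟩
  have h01 := hne 0 1 (by decide)
  have hsub : Pt 1 - Pt 0 ≠ 0 := sub_ne_zero.2 h01.symm
  have h0R : Pt 0 ≠ R := by
    intro h
    rw [hR, left_eq_add, smul_eq_zero] at h
    exact h.elim ht.1 hsub
  have h1R : Pt 1 ≠ R := by
    intro h
    have : (1 - t) • (Pt 1 - Pt 0) = 0 := by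
      rw [sub_smul, one_smul, sub_eq_zero, sub_eq_iff_eq_add, add_comm, ← hR]; exact h
    rw [smul_eq_zero] at this
    exact this.elim (fun h => ht.2 (sub_eq_zero.1 h).symm) hsub
  have hcR : col (Pt 0) (Pt 1) R := by
    rw [hR]; simp [col]; ring
  have hFR : cev a b c d e' f R.1 R.2 ≠ 0 := fun h =>
    key _ _ _ h01 h0R h1R (hFz 0) (hFz 1) h hcR
  obtain ⟨l, hl⟩ : ∃ l, cev a' b' c' d' e'' f' R.1 R.2 = l * cev a b c d e' f R.1 R.2 :=
    ⟨_, (div_mul_cancel₀ _ hFR).symm⟩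
  have hlin : ∀ x y, cev (a' - l * a) (b' - l * b) (c' - l * c) (d' - l * d) (e'' - l * e')
      (f' - l * f) x y = cev a' b' c' d' e'' f' x y - l * cev a b c d e' f x y := by
    intro x y; simp only [cev]; ring
  obtain ⟨u, v, w, m, n, k, h0, hl0, hl1, q1, q2, q3, q4, q5, q6⟩ :=
    factor _ _ _ _ _ _ (Pt 0) (Pt 1) R h01 h0R h1R hcR
      (by rw [hlin, hFz, hGz]; ring : cev (a' - l * a) (b' - l * b) (c' - l * c) (d' - l * d)
        (e'' - l * e') (f' - l * f) (Pt 0).1 (Pt 0).2 = 0)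
      (by rw [hlin, hFz, hGz]; ring) (by rw [hlin, hl]; ring)
  have hprod : ∀ x y, (u * x + v * y + w) * (m * x + n * y + k) =
      cev a' b' c' d' e'' f' x y - l * cev a b c d e' f x y := by
    intro x y
    rw [← hlin, q1, q2, q3, q4, q5, q6]; simp only [cev]; ring
  have hm : ∀ i, i ≠ 0 → i ≠ 1 → m * (Pt i).1 + n * (Pt i).2 + k = 0 := by
    intro i hi0 hi1
    have h := hprod (Pt i).1 (Pt i).2
    rw [hFz, hGz, mul_zero, sub_zero, mul_eq_zero] at h
    refine h.resolve_left fun h => ?_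
    exact key _ _ _ h01 (hne 0 i hi0.symm) (hne 1 i hi1.symm) (hFz _) (hFz _) (hFz _)
      (col_of_line u v w _ _ _ h0 hl0 hl1 h)
  have hm2 := hm 2 (by decide) (by decide)
  have hmn : ¬ (m ≠ 0 ∨ n ≠ 0) := fun h =>
    key _ _ _ (hne 2 3 (by decide)) (hne 2 4 (by decide)) (hne 3 4 (by decide))
      (hFz _) (hFz _) (hFz _) (col_of_line m n k _ _ _ h hm2
        (hm 3 (by decide) (by decide)) (hm 4 (by decide) (by decide)))
  push Not at hmn
  obtain ⟨rfl, rfl⟩ := hmn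
  have hk : k = 0 := by linear_combination hm2
  subst hk
  refine ⟨l, fun x y _ => ?_⟩
  rw [hF, eval_cpoly, eval_cpoly]
  linear_combination -(hprod x y)
end

section
/- Let q be a prime power, r ≥ 2, and let k ≥ 1 with k < q^{2r-1}. Let g ∈ F_{q^r}[x] be a polynomial of degree k having k distinct roots, all lying in F_{q^r}. Then the codeword ev(g(x)) of C_{q,r,k} is minimal: for every b ∈ F_{q^r} and every f ∈ F_{q^r}[x] of degree at most k, if the support of ev(b·y − f(x)) is contained in the support of ev(g(x)), then ev(b·y − f(x)) is a scalar multiple of ev(g(x)). -/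
open Polynomial in
lemma aux_fiber_le {F : Type} [Field F] [Fintype F] [DecidableEq F] (q r : ℕ) (hq : 2 ≤ q)
    (hr : 2 ≤ r) (c : F) :
    (Finset.univ.filter (fun y : F => ∑ i ∈ Finset.range r, y ^ q ^ i = c)).card
      ≤ q ^ (r - 1) := by
  set P : F[X] := ∑ i ∈ Finset.range r, X ^ q ^ i - C c with hP
  have hpos : 0 < q ^ (r - 1) := by positivity
  have hcoeff : P.coeff (q ^ (r - 1)) = 1 := by
    rw [hP, coeff_sub, coeff_C_ne_zero hpos.ne', finset_sum_coeff, sub_zero,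
      Finset.sum_eq_single (r - 1)]
    · simp
    · intro i _ hi
      rw [coeff_X_pow, if_neg]
      intro h
      exact hi (Nat.pow_right_injective hq h).symm
    · intro h
      exact absurd (Finset.mem_range.2 (by omega)) h
  have hP0 : P ≠ 0 := by
    intro h
    rw [h] at hcoeff
    simp at hcoeff
  have hdeg : P.natDegree ≤ q ^ (r - 1) := by
    rw [hP]
    refine (natDegree_sub_le _ _).trans (max_le (natDegree_sum_le_of_forall_le _ _ ?_)
      ((natDegree_C c).le.trans (Nat.zero_le _)))
    intro i hi
    rw [natDegree_X_pow]
    exact Nat.pow_le_pow_right (by omega) (by have := Finset.mem_range.1 hi; omega)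
  refine le_trans (Finset.card_le_card (t := P.roots.toFinset) ?_)
    ((Multiset.toFinset_card_le _).trans ((card_roots' P).trans hdeg))
  intro y hy
  have hy := (Finset.mem_filter.1 hy).2
  rw [Multiset.mem_toFinset, mem_roots hP0, IsRoot, hP]
  simp [eval_finset_sum, hy]

open Polynomial in
lemma aux_fixed_le {F : Type} [Field F] [Fintype F] [DecidableEq F] (q : ℕ) (hq : 2 ≤ q) :
    (Finset.univ.filter (fun y : F => y ^ q = y)).card ≤ q := by
  have hP0 : (X ^ q - X : F[X]) ≠ 0 := FiniteField.X_pow_card_sub_X_ne_zero F (by omega)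
  have hdeg : (X ^ q - X : F[X]).natDegree = q :=
    FiniteField.X_pow_card_sub_X_natDegree_eq F (by omega)
  refine le_trans (Finset.card_le_card (t := (X ^ q - X : F[X]).roots.toFinset) ?_)
    ((Multiset.toFinset_card_le _).trans ((card_roots' _).trans hdeg.le))
  intro y hy
  have hy := (Finset.mem_filter.1 hy).2
  rw [Multiset.mem_toFinset, mem_roots hP0, IsRoot]
  simp [hy]

lemma aux_trace_fixed {F : Type} [Field F] [Fintype F] (p m r q : ℕ) (hp : p.Prime)
    (hm : 0 < m) (hr : 2 ≤ r) (hq : q = p ^ m) (hF : Fintype.card F = q ^ r) (y : F) :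
    (∑ i ∈ Finset.range r, y ^ q ^ i) ^ q = ∑ i ∈ Finset.range r, y ^ q ^ i := by
  haveI : Fact p.Prime := ⟨hp⟩
  haveI : CharP F p := charP_of_card_eq_prime_pow (f := m * r) (by
    rw [hF, hq, pow_mul])
  have h1 : (∑ i ∈ Finset.range r, y ^ q ^ i) ^ q = ∑ i ∈ Finset.range r, y ^ q ^ (i + 1) := by
    conv_lhs => rw [hq]
    rw [sum_pow_char_pow]
    refine Finset.sum_congr rfl fun i _ => ?_
    rw [← hq, ← pow_mul, ← pow_succ]
  rw [h1]
  have h2 := Finset.sum_range_succ (fun i => y ^ q ^ i) r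
  rw [Finset.sum_range_succ'] at h2
  have h3 : y ^ q ^ r = y := by rw [← hF]; exact FiniteField.pow_card y
  rw [h3, pow_zero, pow_one] at h2
  exact add_right_cancel h2

lemma aux_norm_fixed {F : Type} [Field F] [Fintype F] (q r : ℕ) (hq : 2 ≤ q) (hr : 2 ≤ r)
    (hF : Fintype.card F = q ^ r) (x : F) :
    (x ^ ((q ^ r - 1) / (q - 1))) ^ q = x ^ ((q ^ r - 1) / (q - 1)) := by
  by_cases hx : x = 0
  · have hE : (q ^ r - 1) / (q - 1) ≠ 0 := by
      have : q ≤ q ^ r := Nat.le_self_pow (by omega) q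
      exact (Nat.div_pos (by omega) (by omega)).ne'
    rw [hx, zero_pow hE, zero_pow (by omega)]
  · have hd : (q - 1) ∣ (q ^ r - 1) := by simpa using Nat.sub_dvd_pow_sub_pow q 1 r
    have h1 : (x ^ ((q ^ r - 1) / (q - 1))) ^ (q - 1) = 1 := by
      rw [← pow_mul, Nat.div_mul_cancel hd, ← hF]
      exact FiniteField.pow_card_sub_one_eq_one x hx
    calc (x ^ ((q ^ r - 1) / (q - 1))) ^ q
        = (x ^ ((q ^ r - 1) / (q - 1))) ^ ((q - 1) + 1) := by
          congr 1; omega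
      _ = _ := by rw [pow_succ, h1, one_mul]

lemma aux_two {F : Type} [Field F] [Fintype F] [DecidableEq F] (p m r q : ℕ) (hp : p.Prime)
    (hm : 0 < m) (hr : 2 ≤ r) (hq : q = p ^ m) (hF : Fintype.card F = q ^ r) (x : F) :
    ∃ y z : F, y ≠ z ∧ x ^ ((q ^ r - 1) / (q - 1)) = ∑ i ∈ Finset.range r, y ^ q ^ i ∧
      x ^ ((q ^ r - 1) / (q - 1)) = ∑ i ∈ Finset.range r, z ^ q ^ i := by
  have hq2 : 2 ≤ q := by
    rw [hq]
    exact hp.two_le.trans (Nat.le_self_pow (by omega) p)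
  set c := x ^ ((q ^ r - 1) / (q - 1)) with hc
  set S := Finset.univ.filter (fun y : F => y ^ q = y) with hS
  have hcS : c ∈ S := by simp [hS, hc, aux_norm_fixed q r hq2 hr hF x]
  have hsum := Finset.card_eq_sum_card_fiberwise (s := (Finset.univ : Finset F)) (t := S)
    (f := fun y => ∑ i ∈ Finset.range r, y ^ q ^ i)
    (fun y _ => by simp [hS, aux_trace_fixed p m r q hp hm hr hq hF y])
  have hone : 1 < (Finset.univ.filter
      (fun y : F => ∑ i ∈ Finset.range r, y ^ q ^ i = c)).card := by
    by_contra hcon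
    have hbig : 2 ≤ q ^ (r - 1) := hq2.trans (Nat.le_self_pow (by omega) q)
    have hlt := Finset.sum_lt_sum (s := S)
      (f := fun c => (Finset.univ.filter
        (fun y : F => ∑ i ∈ Finset.range r, y ^ q ^ i = c)).card)
      (g := fun _ => q ^ (r - 1)) (fun c _ => aux_fiber_le q r hq2 hr c)
      ⟨c, hcS, by omega⟩
    rw [← hsum, Finset.sum_const, Finset.card_univ, hF, smul_eq_mul] at hlt
    have h2 : S.card * q ^ (r - 1) ≤ q * q ^ (r - 1) :=
      Nat.mul_le_mul_right _ (aux_fixed_le q hq2)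
    rw [← pow_succ', Nat.sub_add_cancel (by omega)] at h2
    omega
  obtain ⟨y, hy, z, hz, hyz⟩ := Finset.one_lt_card.1 hone
  exact ⟨y, z, hyz, (Finset.mem_filter.1 hy).2.symm, (Finset.mem_filter.1 hz).2.symm⟩


/-- If `g ∈ F_{q^r}[x]` has degree `k` with `k` distinct roots all in `F_{q^r}`, then the
codeword `ev(g(x))` of `C_{q,r,k}` is minimal: every codeword `ev(b·y − f(x))` whose
support is contained in the support of `ev(g(x))` is a scalar multiple of `ev(g(x))`. -/
theorem stmt_15 (p m r k : ℕ) (hp : p.Prime) (hm : 0 < m) (hr : 2 ≤ r)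
    (q : ℕ) (hq : q = p ^ m) (hk1 : 1 ≤ k) (hk2 : k < q ^ (2 * r - 1))
    (F : Type) [Field F] [Fintype F] [DecidableEq F] (hF : Fintype.card F = q ^ r)
    (g : Polynomial F) (hgdeg : g.natDegree = k) (hroots : g.roots.toFinset.card = k) :
    ∀ (b : F) (f : Polynomial F), f.natDegree ≤ k →
      (∀ x y : F, x ^ ((q ^ r - 1) / (q - 1)) = ∑ i ∈ Finset.range r, y ^ q ^ i →
        b * y - f.eval x ≠ 0 → g.eval x ≠ 0) →
      ∃ l : F, ∀ x y : F, x ^ ((q ^ r - 1) / (q - 1)) = ∑ i ∈ Finset.range r, y ^ q ^ i →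
        b * y - f.eval x = l * g.eval x := by
  intro b f hf hsupp
  have hg0 : g ≠ 0 := by
    rintro rfl
    simp at hgdeg
    omega
  have hval : ∀ x y : F, x ^ ((q ^ r - 1) / (q - 1)) = ∑ i ∈ Finset.range r, y ^ q ^ i →
      g.eval x = 0 → b * y - f.eval x = 0 := by
    intro x y h hg
    by_contra hne
    exact hsupp x y h hne hg
  have hb : b = 0 := by
    obtain ⟨a, ha⟩ := Finset.card_pos.1 (show 0 < g.roots.toFinset.card by omega)
    have ha : g.eval a = 0 := (Polynomial.mem_roots hg0).1 (Multiset.mem_toFinset.1 ha)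
    obtain ⟨y, z, hyz, hy, hz⟩ := aux_two p m r q hp hm hr hq hF a
    have h1 := hval a y hy ha
    have h2 := hval a z hz ha
    have h3 : b * (y - z) = 0 := by linear_combination h1 - h2
    exact (mul_eq_zero.1 h3).resolve_right (sub_ne_zero.2 hyz)
  have hfroot : ∀ a, g.eval a = 0 → f.eval a = 0 := by
    intro a ha
    obtain ⟨y, z, hyz, hy, hz⟩ := aux_two p m r q hp hm hr hq hF a
    have h1 := hval a y hy ha
    rw [hb] at h1
    simpa using h1
  -- the polynomial `lc(g) f - coeff_k(f) g` has degree below `k` and vanishes on `k` points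
  have hlc : g.coeff k ≠ 0 := by
    rw [← hgdeg]
    exact Polynomial.leadingCoeff_ne_zero.2 hg0
  set h : Polynomial F := Polynomial.C (g.coeff k) * f - Polynomial.C (f.coeff k) * g with hh
  have hdeg : h.degree < (k : ℕ) := by
    rw [Polynomial.degree_lt_iff_coeff_zero]
    intro n hn
    rcases hn.eq_or_lt with rfl | hn
    · simp [hh, mul_comm]
    · simp [hh, Polynomial.coeff_eq_zero_of_natDegree_lt (hf.trans_lt hn),
        Polynomial.coeff_eq_zero_of_natDegree_lt (hgdeg.le.trans_lt hn)]
  have h0 : h = 0 := by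
    refine Polynomial.eq_zero_of_degree_lt_of_eval_finset_eq_zero g.roots.toFinset
      (by rw [hroots]; exact hdeg) ?_
    intro a ha
    have ha : g.eval a = 0 := (Polynomial.mem_roots hg0).1 (Multiset.mem_toFinset.1 ha)
    simp [hh, ha, hfroot a ha]
  refine ⟨-(f.coeff k / g.coeff k), fun x y _ => ?_⟩
  have hx : h.eval x = 0 := by rw [h0]; simp
  simp only [hh, Polynomial.eval_sub, Polynomial.eval_mul, Polynomial.eval_C] at hx
  rw [hb]
  field_simp
  linear_combination -hx
end

section
/- Let q be a prime power and r ≥ 2. Let f ∈ F_{q^r}[x] be a polynomial having at least one root in F_{q^r}, let b ∈ F_{q^r} with b ≠ 0, and let g ∈ F_{q^r}[x]. Then the support of the evaluation vector ev(b·y − g(x)) at the affine F_{q^r}-rational points of the Norm-Trace curve N_{q,r} is NOT contained in the support of ev(f(x)); equivalently, there exists an affine F_{q^r}-rational point (x₀, y₀) of N_{q,r} with f(x₀) = 0 but b·y₀ ≠ g(x₀). -/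
/-- If `f ∈ F_{q^r}[x]` has a root in `F_{q^r}` and `b ≠ 0`, then the support of
`ev(b·y − g(x))` is not contained in the support of `ev(f(x))`: there is an affine
`F_{q^r}`-rational point `(x₀, y₀)` of the Norm-Trace curve with `f(x₀) = 0` but
`b·y₀ ≠ g(x₀)`. -/
theorem stmt_17 (p m r : ℕ) (hp : p.Prime) (hm : 0 < m) (hr : 2 ≤ r)
    (q : ℕ) (hq : q = p ^ m)
    (F : Type) [Field F] [Fintype F] (hF : Fintype.card F = q ^ r)
    (f g : Polynomial F) (b : F) (hb : b ≠ 0) (hroot : ∃ t : F, f.eval t = 0) :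
    ∃ x₀ y₀ : F, x₀ ^ ((q ^ r - 1) / (q - 1)) = ∑ i ∈ Finset.range r, y₀ ^ q ^ i ∧
      f.eval x₀ = 0 ∧ b * y₀ ≠ g.eval x₀ := by
  classical
  haveI : Fact p.Prime := ⟨hp⟩
  have hcp : CharP F p := charP_of_card_eq_prime_pow (f := m * r) (by
    rw [hF, hq, pow_mul])
  have hq2 : 2 ≤ q := by
    rw [hq]
    calc 2 ≤ p := hp.two_le
      _ = p ^ 1 := (pow_one p).symm
      _ ≤ p ^ m := Nat.pow_le_pow_right hp.pos hm
  obtain ⟨t, ht⟩ := hroot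
  obtain ⟨s, rfl⟩ : ∃ s, r = s + 1 := ⟨r - 1, by omega⟩
  have hs : 1 ≤ s := by omega
  have hcard : ∀ y : F, y ^ q ^ (s + 1) = y := fun y => by
    rw [← hF]; exact FiniteField.pow_card y
  set T : F → F := fun y => ∑ i ∈ Finset.range (s + 1), y ^ q ^ i with hT
  set K : Finset F := Finset.univ.filter (fun c => c ^ q = c) with hK
  have hTK : ∀ y, T y ∈ K := by
    intro y
    simp only [hK, hT, Finset.mem_filter, Finset.mem_univ, true_and]
    have h1 : (∑ i ∈ Finset.range (s + 1), y ^ q ^ i) ^ q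
        = ∑ i ∈ Finset.range (s + 1), y ^ q ^ (i + 1) := by
      conv_lhs => rw [hq, sum_pow_char_pow]
      refine Finset.sum_congr rfl fun i _ => ?_
      rw [← hq, ← pow_mul, ← pow_succ]
    rw [h1, Finset.sum_range_succ, hcard, Finset.sum_range_succ' (fun i => y ^ q ^ i)]
    simp
  have hKcard : K.card ≤ q := by
    have hne : (Polynomial.X ^ q - Polynomial.X : Polynomial F) ≠ 0 :=
      FiniteField.X_pow_card_sub_X_ne_zero F (by omega)
    calc K.card ≤ (Polynomial.X ^ q - Polynomial.X : Polynomial F).natDegree := by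
          apply Polynomial.card_le_degree_of_subset_roots
          intro c hc
          have hc' : c ^ q = c := by simpa [hK] using hc
          rw [Polynomial.mem_roots hne]
          simp [hc']
      _ = q := FiniteField.X_pow_card_sub_X_natDegree_eq F (by omega)
  have hfib : ∀ c, (Finset.univ.filter (fun y => T y = c)).card ≤ q ^ s := by
    intro c
    set P : Polynomial F :=
      Polynomial.X ^ q ^ s + ((∑ i ∈ Finset.range s, Polynomial.X ^ q ^ i) - Polynomial.C c) with hP
    have hdeg : ((∑ i ∈ Finset.range s, (Polynomial.X : Polynomial F) ^ q ^ i)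
        - Polynomial.C c).degree < ((q ^ s : ℕ) : WithBot ℕ) := by
      refine lt_of_le_of_lt (Polynomial.degree_sub_le _ _) (max_lt ?_ ?_)
      · refine lt_of_le_of_lt (Polynomial.degree_sum_le _ _) ?_
        rw [Finset.sup_lt_iff (WithBot.bot_lt_coe _)]
        intro i hi
        rw [Polynomial.degree_X_pow]
        exact_mod_cast Nat.pow_lt_pow_right (by omega) (Finset.mem_range.mp hi)
      · refine lt_of_le_of_lt Polynomial.degree_C_le ?_
        exact_mod_cast Nat.pow_pos (by omega)
    have hm' : P.Monic := Polynomial.monic_X_pow_add hdeg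
    have hnd : P.natDegree = q ^ s := by
      apply Polynomial.natDegree_eq_of_degree_eq_some
      rw [hP, Polynomial.degree_add_eq_left_of_degree_lt, Polynomial.degree_X_pow]
      rwa [Polynomial.degree_X_pow]
    rw [← hnd]
    apply Polynomial.card_le_degree_of_subset_roots
    intro y hy
    have hy' : T y = c := by simpa using hy
    rw [Polynomial.mem_roots hm'.ne_zero, Polynomial.IsRoot.def]
    simp only [hP, ← hy', hT, Polynomial.eval_add, Polynomial.eval_sub, Polynomial.eval_pow,
      Polynomial.eval_X, Polynomial.eval_C, Polynomial.eval_finset_sum, Finset.sum_range_succ]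
    ring
  have hdvd : (q ^ (s + 1) - 1) / (q - 1) * (q - 1) = q ^ (s + 1) - 1 := by
    apply Nat.div_mul_cancel
    simpa using Nat.sub_dvd_pow_sub_pow q 1 (s + 1)
  have hbig : q ≤ q ^ s := Nat.le_self_pow (by omega) q
  have hbig2 : q ^ s ≤ q ^ (s + 1) := Nat.pow_le_pow_right (by omega) (by omega)
  have hcK : t ^ ((q ^ (s + 1) - 1) / (q - 1)) ∈ K := by
    simp only [hK, Finset.mem_filter, Finset.mem_univ, true_and]
    generalize (q ^ (s + 1) - 1) / (q - 1) = e at hdvd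
    obtain ⟨e, rfl⟩ : ∃ e', e = e' + 1 := by
      refine ⟨e - 1, ?_⟩
      rcases Nat.eq_zero_or_pos e with h | h
      · rw [h] at hdvd; omega
      · omega
    have : (e + 1) * q = q ^ (s + 1) + e := by
      obtain ⟨k, rfl⟩ : ∃ k, q = k + 1 := ⟨q - 1, by omega⟩
      rw [Nat.add_sub_cancel] at hdvd
      rw [mul_add, hdvd]; omega
    rw [← pow_mul, this, pow_add, hcard, pow_succ, mul_comm]
  set c := t ^ ((q ^ (s + 1) - 1) / (q - 1)) with hc
  have htwo : 1 < (Finset.univ.filter (fun y => T y = c)).card := by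
    by_contra hlt
    have hsum : Fintype.card F = ∑ c ∈ K, (Finset.univ.filter (fun y => T y = c)).card :=
      Finset.card_eq_sum_card_fiberwise (fun y _ => hTK y)
    rw [← Finset.add_sum_erase K _ hcK] at hsum
    have h2 : ∑ c ∈ K.erase c, (Finset.univ.filter (fun y => T y = c)).card
        ≤ (K.erase c).card * q ^ s := by
      simpa using Finset.sum_le_card_nsmul (K.erase c) _ (q ^ s) (fun d _ => hfib d)
    have h3 : (K.erase c).card ≤ q - 1 := by
      rw [Finset.card_erase_of_mem hcK]; omega
    have h4 := Nat.mul_le_mul_right (q ^ s) h3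
    have h5 : q ^ (s + 1) = (q - 1) * q ^ s + q ^ s := by
      obtain ⟨k, rfl⟩ : ∃ k, q = k + 1 := ⟨q - 1, by omega⟩
      rw [Nat.add_sub_cancel]; ring
    omega
  obtain ⟨y, hy, z, hz, hyz⟩ := Finset.one_lt_card.mp htwo
  have hy' : T y = c := by simpa using hy
  have hz' : T z = c := by simpa using hz
  by_cases h : b * y = g.eval t
  · refine ⟨t, z, hz'.symm, ht, fun h' => hyz ?_⟩
    exact mul_left_cancel₀ hb (h.trans h'.symm)
  · exact ⟨t, y, hy'.symm, ht, h⟩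
end

section
/- Let q be a prime power, r ≥ 2, and let k be an integer with 0 ≤ k < q^{r-1}. Then the k+2 functions on the set of affine F_{q^r}-rational points of the Norm-Trace curve N_{q,r} given by (x,y) ↦ 1, (x,y) ↦ x, (x,y) ↦ x², …, (x,y) ↦ x^k, and (x,y) ↦ y are linearly independent over F_{q^r}; that is, if b ∈ F_{q^r} and a_0,…,a_k ∈ F_{q^r} satisfy b·y = a_k x^k + … + a_1 x + a_0 for all (x,y) ∈ F_{q^r}² with N(x) = T(y), then b = a_0 = a_1 = … = a_k = 0. -/
open Polynomial in
/-- A nonzero polynomial bounds the size of any finite set of its zeros. -/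
lemma card_le_of_zeros {F : Type} [Field F] (P : F[X]) (hP : P ≠ 0) (s : Finset F)
    (hs : ∀ x ∈ s, P.eval x = 0) : s.card ≤ P.natDegree := by
  apply Polynomial.card_le_degree_of_subset_roots
  intro x hx
  rw [Polynomial.mem_roots hP]
  exact hs x hx

open Polynomial in
lemma trace_fiber_card {F : Type} [Field F] (q r : ℕ) (hq : 1 < q) (hr : 1 ≤ r) (c : F)
    (s : Finset F) (hs : ∀ y ∈ s, ∑ i ∈ Finset.range r, y ^ q ^ i = c) :
    s.card ≤ q ^ (r - 1) := by
  obtain ⟨n, rfl⟩ : ∃ n, r = n + 1 := ⟨r - 1, by omega⟩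
  simp only [Nat.add_sub_cancel]
  let P : F[X] := ∑ i ∈ Finset.range (n + 1), X ^ q ^ i - C c
  have hcoef : P.coeff (q ^ n) = 1 := by
    have h0 : q ^ n ≠ 0 := by positivity
    simp only [P, coeff_sub, finset_sum_coeff, coeff_X_pow, coeff_C, h0, if_false, sub_zero]
    rw [Finset.sum_eq_single n]
    · simp
    · intro i _ hi
      rw [if_neg]
      intro h
      exact hi (Nat.pow_right_injective hq h).symm
    · simp
  have hP : P ≠ 0 := by
    intro h
    rw [h] at hcoef
    simp at hcoef
  refine (card_le_of_zeros P hP s ?_).trans ?_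
  · intro y hy
    simp [P, eval_finset_sum, hs y hy]
  · refine (natDegree_sub_le _ _).trans ?_
    rw [natDegree_C, max_eq_left (Nat.zero_le _)]
    refine natDegree_sum_le_of_forall_le _ _ ?_
    intro i hi
    rw [natDegree_X_pow]
    exact Nat.pow_le_pow_right (by omega) (by simpa [Nat.lt_succ_iff] using hi)

open Polynomial in
/-- For `0 ≤ k < q^{r-1}`, the functions `1, x, x², …, x^k, y` on the set of affine
`F_{q^r}`-rational points of the Norm-Trace curve are linearly independent over
`F_{q^r}`. -/
theorem stmt_19 (p m r k : ℕ) (hp : p.Prime) (hm : 0 < m) (hr : 2 ≤ r)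
    (q : ℕ) (hq : q = p ^ m) (hk : k < q ^ (r - 1))
    (F : Type) [Field F] [Fintype F] (hF : Fintype.card F = q ^ r)
    (b : F) (a : ℕ → F)
    (h : ∀ x y : F, x ^ ((q ^ r - 1) / (q - 1)) = ∑ i ∈ Finset.range r, y ^ q ^ i →
      b * y = ∑ i ∈ Finset.range (k + 1), a i * x ^ i) :
    b = 0 ∧ ∀ i ∈ Finset.range (k + 1), a i = 0 := by
  classical
  have hq1 : 1 < q := by rw [hq]; exact Nat.one_lt_pow hm.ne' hp.one_lt
  haveI : Fact p.Prime := ⟨hp⟩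
  haveI : CharP F p := charP_of_card_eq_prime_pow (f := m * r) (by
    rw [hF, hq, pow_mul])
  have hcard : ∀ y : F, y ^ q ^ r = y := fun y => by rw [← hF]; exact FiniteField.pow_card y
  have hdvd : (q ^ r - 1) / (q - 1) * (q - 1) = q ^ r - 1 :=
    Nat.div_mul_cancel (by simpa using Nat.sub_dvd_pow_sub_pow q 1 r)
  have hqr : 1 < q ^ r := Nat.one_lt_pow (by omega) hq1
  set e := (q ^ r - 1) / (q - 1) with he
  have he0 : e ≠ 0 := by
    intro h0
    rw [h0] at hdvd
    omega
  let T : F → F := fun y => ∑ i ∈ Finset.range r, y ^ q ^ i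
  have hTq : ∀ y, T y ^ q = T y := by
    intro y
    have h1 : T y ^ q = ∑ i ∈ Finset.range r, y ^ q ^ (i + 1) := by
      simp only [T]
      rw [hq, sum_pow_char_pow]
      refine Finset.sum_congr rfl fun i _ => ?_
      rw [← pow_mul, ← pow_succ]
    rw [h1]
    have h2 := Finset.sum_range_succ (fun i => y ^ q ^ i) r
    rw [Finset.sum_range_succ'] at h2
    simp only [hcard, pow_zero, pow_one] at h2
    exact add_right_cancel h2
  have hTsub : ∀ y z, T (y - z) = T y - T z := by
    intro y z
    simp only [T]
    rw [← Finset.sum_sub_distrib]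
    refine Finset.sum_congr rfl fun i _ => ?_
    rw [hq, ← pow_mul, sub_pow_char_pow]
  let K : Finset F := Finset.univ.filter fun z => z ^ q = z
  have hK : K.card ≤ q := by
    have := card_le_of_zeros (X ^ q - X : F[X]) (FiniteField.X_pow_card_sub_X_ne_zero F hq1) K
      (by intro x hx; simp [K] at hx; simp [hx])
    rwa [FiniteField.X_pow_card_sub_X_natDegree_eq F hq1] at this
  have hsub : Finset.univ.image T ⊆ K := by
    intro z hz
    obtain ⟨y, -, rfl⟩ := Finset.mem_image.1 hz
    simp [K, hTq]
  have hbig : q ^ r ≤ q ^ (r - 1) * (Finset.univ.image T).card := by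
    rw [← hF, ← Finset.card_univ]
    refine Finset.card_le_mul_card_image _ _ ?_
    intro c _
    exact trace_fiber_card q r hq1 (by omega) c _ (by intro y hy; simpa [T] using hy)
  have himg : Finset.univ.image T = K := by
    refine Finset.eq_of_subset_of_card_le hsub (hK.trans ?_)
    have h1 : q ^ r = q ^ (r - 1) * q := by rw [← pow_succ]; congr 1; omega
    rw [h1] at hbig
    exact Nat.le_of_mul_le_mul_left hbig (by positivity)
  have hsurj : ∀ x : F, ∃ y, x ^ e = T y := by
    intro x
    have hx : x ^ e ∈ K := by
      simp only [K, Finset.mem_filter, Finset.mem_univ, true_and]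
      by_cases hx : x = 0
      · subst hx
        rw [zero_pow he0, zero_pow (by omega)]
      · have h1 : (x ^ e) ^ (q - 1) = 1 := by
          rw [← pow_mul, hdvd, ← hF]
          exact FiniteField.pow_card_sub_one_eq_one x hx
        obtain ⟨t, rfl⟩ : ∃ t, q = t + 1 := ⟨q - 1, by omega⟩
        rw [Nat.add_sub_cancel] at h1
        rw [pow_succ, h1, one_mul]
    rw [← himg] at hx
    obtain ⟨y, -, hy⟩ := Finset.mem_image.1 hx
    exact ⟨y, hy.symm⟩
  have hqlt : q < q ^ r := by
    calc q = q ^ 1 := (pow_one q).symm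
      _ < q ^ r := Nat.pow_lt_pow_right hq1 (by omega)
  have hb : b = 0 := by
    obtain ⟨y, -, z, -, hyz, hT⟩ := Finset.exists_ne_map_eq_of_card_lt_of_maps_to
      (s := (Finset.univ : Finset F)) (t := K) (f := T)
      (by rw [Finset.card_univ, hF]; omega)
      (by intro y _; simp [K, hTq])
    have h0 : T (y - z) = 0 := by rw [hTsub, hT, sub_self]
    have h00 : T 0 = 0 := by have := hTsub 0 0; simpa using this
    have e1 := h 0 (y - z) (by rw [zero_pow he0]; exact h0.symm)
    have e2 := h 0 0 (by rw [zero_pow he0]; exact h00.symm)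
    rw [← e2, mul_zero] at e1
    exact (mul_eq_zero.1 e1).resolve_right (sub_ne_zero.2 hyz)
  refine ⟨hb, ?_⟩
  let P : F[X] := ∑ i ∈ Finset.range (k + 1), C (a i) * X ^ i
  have hPdeg : P.natDegree ≤ k := by
    refine natDegree_sum_le_of_forall_le _ _ ?_
    intro i hi
    exact (natDegree_C_mul_X_pow_le _ _).trans (by simpa [Nat.lt_succ_iff] using hi)
  have hP0 : P = 0 := by
    by_contra hne
    have h1 := card_le_of_zeros P hne Finset.univ (by
      intro x _
      obtain ⟨y, hy⟩ := hsurj x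
      have := h x y hy
      rw [hb, zero_mul] at this
      simp [P, eval_finset_sum, ← this])
    rw [Finset.card_univ, hF] at h1
    have h2 : q ^ (r - 1) ≤ q ^ r := Nat.pow_le_pow_right (by omega) (by omega)
    omega
  intro i hi
  have : P.coeff i = a i := by
    simp only [P, finset_sum_coeff, coeff_C_mul_X_pow]
    rw [Finset.sum_eq_single i]
    · simp
    · intro j _ hj
      rw [if_neg (Ne.symm hj)]
    · intro h; exact absurd hi h
  rw [← this, hP0, coeff_zero]
end
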